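/- Let n ≥ 3 and let P be a finite-volume non-compact right-angled convex hyperbolic n-polyhedron. Then the number of facets of P satisfies a_{n−1}(P) ≥ 1 + ν_{n−1}, where ν_{n−1} = sInf {a_{n−2}(Q) + v_∞(Q) : Q a finite-volume non-compact right-angled convex hyperbolic (n−1)-polyhedron}. -/

import Mathlib

open scoped BigOperators

noncomputable section

/-- The Minkowski bilinear form `⟨x,y⟩ = -x₀y₀ + x₁y₁ + ⋯ + xₙyₙ` on `ℝ^{n+1}`. -/
def mink {n : ℕ} (x y : Fin (n + 1) → ℝ) : ℝ :=
  -(x 0 * y 0) + ∑ i : Fin n, x i.succ * y i.succ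

/-- The hyperboloid model of the hyperbolic space `ℍⁿ`. -/
def Hyperboloid (n : ℕ) : Set (Fin (n + 1) → ℝ) :=
  {x | mink x x = -1 ∧ 0 < x 0}

/-- The Klein projection `x ↦ (x₁/x₀, …, xₙ/x₀)` of the hyperboloid onto the unit ball. -/
def kleinMap {n : ℕ} (x : Fin (n + 1) → ℝ) : EuclideanSpace ℝ (Fin n) :=
  WithLp.toLp 2 fun i => x i.succ / x 0

/-- Dimension of a subset of a real vector space: the rank of its vector span. -/
def sdim {n : ℕ} (s : Set (EuclideanSpace ℝ (Fin n))) : ℕ :=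
  Module.finrank ℝ (vectorSpan ℝ s)

/-- A convex hyperbolic `n`-polyhedron: a finite intersection of hyperbolic half-spaces
`H_{eᵢ}⁻ = {x : ⟨eᵢ,x⟩ ≤ 0}` (with `⟨eᵢ,eᵢ⟩ = 1`) having nonempty interior
(equivalently, its Klein-model image has nonempty interior in `ℝⁿ`). -/
structure HypPolyhedron (n : ℕ) where
  m : ℕ
  e : Fin m → (Fin (n + 1) → ℝ)
  unit : ∀ i, mink (e i) (e i) = 1
  nonempty_int :
    (interior (kleinMap '' {x ∈ Hyperboloid n | ∀ i, mink (e i) x ≤ 0})).Nonempty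

namespace HypPolyhedron

variable {n : ℕ} (P : HypPolyhedron n)

/-- The set of points of the polyhedron in the hyperboloid model. -/
def carrier : Set (Fin (n + 1) → ℝ) :=
  {x ∈ Hyperboloid n | ∀ i, mink (P.e i) x ≤ 0}

/-- `P̄`: the closure of the Klein-model image of the polyhedron in the closed unit ball. -/
def cl : Set (EuclideanSpace ℝ (Fin n)) :=
  closure (kleinMap '' P.carrier)

/-- The `k`-faces of `P`: the `k`-dimensional (nonempty) exposed faces of `P̄`. -/
def faces (k : ℕ) : Set (Set (EuclideanSpace ℝ (Fin n))) :=
  {F | IsExposed ℝ P.cl F ∧ F.Nonempty ∧ sdim F = k}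

/-- `a_k(P)`: the number of `k`-faces of `P`. -/
def a (k : ℕ) : ℕ := (P.faces k).ncard

/-- Vertices of `P`: the points of `0`-dimensional exposed faces of `P̄`. -/
def verts : Set (EuclideanSpace ℝ (Fin n)) :=
  {v | IsExposed ℝ P.cl {v}}

/-- Ideal vertices: vertices lying on the unit sphere. -/
def idealVerts : Set (EuclideanSpace ℝ (Fin n)) :=
  {v ∈ P.verts | ‖v‖ = 1}

/-- Finite vertices: vertices lying in the open unit ball. -/
def finiteVerts : Set (EuclideanSpace ℝ (Fin n)) :=
  {v ∈ P.verts | ‖v‖ < 1}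

/-- `v_∞(P)`: the number of ideal vertices of `P`. -/
def vInf : ℕ := P.idealVerts.ncard

/-- The bounding hyperplane `H_e` contains the face `F`. -/
def faceInHyperplane (e : Fin (n + 1) → ℝ) (F : Set (EuclideanSpace ℝ (Fin n))) : Prop :=
  ∀ x ∈ P.carrier, kleinMap x ∈ F → mink e x = 0

/-- `P` is right-angled: whenever two distinct bounding hyperplanes both contain an
`(n-2)`-dimensional face of `P`, the corresponding unit normals are orthogonal,
i.e. the dihedral angle is `π/2`. -/
def IsRightAngled : Prop :=
  ∀ i j : Fin P.m, i ≠ j →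
    (∃ F ∈ P.faces (n - 2), P.faceInHyperplane (P.e i) F ∧ P.faceInHyperplane (P.e j) F) →
    mink (P.e i) (P.e j) = 0

/-- `P` has finite volume: `P̄` is the convex hull of its (finitely many) vertices. -/
def FiniteVolume : Prop :=
  P.verts.Finite ∧ P.cl = convexHull ℝ P.verts

/-- `P` is compact: finite volume and all vertices are finite. -/
def IsCompactPoly : Prop :=
  P.FiniteVolume ∧ ∀ v ∈ P.verts, ‖v‖ < 1

/-- `P` is ideal: finite volume and all vertices are ideal. -/
def IsIdeal : Prop :=
  P.FiniteVolume ∧ ∀ v ∈ P.verts, ‖v‖ = 1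

end HypPolyhedron

/-- `ν(P) = a_{n-1}(P) + v_∞(P)` ranging over the family `𝒫ⁿ` of finite-volume non-compact
right-angled convex hyperbolic `n`-polyhedra. -/
def nuSet (n : ℕ) : Set ℕ :=
  {m | ∃ P : HypPolyhedron n,
        P.FiniteVolume ∧ P.IsRightAngled ∧ ¬ P.IsCompactPoly ∧ P.a (n - 1) + P.vInf = m}

/-- `νₙ = sInf {ν(P) : P ∈ 𝒫ⁿ}` (with `sInf ∅ = 0`). -/
def nu (n : ℕ) : ℕ := sInf (nuSet n)

/-!
In the cone over `P` in Minkowski space an ideal vertex is a null vector, and since `P` has finite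
volume and is not compact, there is one; some facet `H_a` of `P` passes through it. The walls of the
facet `Q = P ∩ H_a` are the traces of the walls of `P` orthogonal to `H_a`, and `Q` is again of
finite volume, right-angled and non-compact. At every ideal vertex of `Q` there is a wall `H_j` of
`P` that is parallel to `H_a`, with `⟨e_j, e_a⟩ < 0`: otherwise the cone would open up at the null
vector in the direction `-e_a`, which is impossible for a finitely generated cone. A wall `H_j`
through two ideal vertices of `Q` would meet `H_a` at a right angle, so distinct ideal vertices have
distinct parallel walls. The wall `H_a`, the walls orthogonal to it and the walls parallel to it at
an ideal vertex of `Q` are therefore `1 + a_{n-2}(Q) + v_∞(Q)` different facets of `P`.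
-/

open Filter Topology

section Convexity

theorem tendsto_add_smul_nhdsGT_zero {E : Type*} [AddCommGroup E] [Module ℝ E]
    [TopologicalSpace E] [ContinuousAdd E] [ContinuousSMul ℝ E] (x v : E) :
    Tendsto (fun t : ℝ => x + t • v) (𝓝[>] 0) (𝓝 x) := by
  have h : Continuous fun t : ℝ => x + t • v := by fun_prop
  simpa using (h.tendsto 0).mono_left nhdsWithin_le_nhds

theorem mem_of_forall_pos_add_smul_mem {E : Type*} [AddCommGroup E] [Module ℝ E]
    [TopologicalSpace E] [ContinuousAdd E] [ContinuousSMul ℝ E] {C : Set E} (hC : IsClosed C)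
    {x v : E} (h : ∀ t : ℝ, 0 < t → x + t • v ∈ C) : x ∈ C :=
  hC.mem_of_tendsto (tendsto_add_smul_nhdsGT_zero x v) (eventually_nhdsWithin_of_forall h)

theorem le_vectorSpan_of_eventually_mem {E : Type*} [AddCommGroup E] [Module ℝ E]
    [TopologicalSpace E] [ContinuousAdd E] [ContinuousSMul ℝ E] {F : Set E} {W : Submodule ℝ E}
    {s : E} (hs : s ∈ F) (hF : ∀ᶠ p in 𝓝 s, p - s ∈ W → p ∈ F) : W ≤ vectorSpan ℝ F := by
  intro v hv
  obtain ⟨t, ht, ht0⟩ :=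
    (((tendsto_add_smul_nhdsGT_zero s v).eventually hF).and self_mem_nhdsWithin).exists
  have htv : s + t • v -ᵥ s ∈ vectorSpan ℝ F :=
    vsub_mem_vectorSpan ℝ (ht (by simpa using W.smul_mem t hv)) hs
  rwa [vsub_eq_sub, add_sub_cancel_left, Submodule.smul_mem_iff _ (ne_of_gt ht0)] at htv

theorem exists_forall_neg_of_convexOn {E ι : Type*} [AddCommGroup E] [Module ℝ E] {G : Set E}
    (hG : G.Nonempty) {f : ι → E → ℝ} (A : Finset ι) (hf : ∀ i ∈ A, ConvexOn ℝ G (f i))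
    (hle : ∀ i ∈ A, ∀ x ∈ G, f i x ≤ 0) (hlt : ∀ i ∈ A, ∃ x ∈ G, f i x < 0) :
    ∃ z ∈ G, ∀ i ∈ A, f i z < 0 := by
  induction A using Finset.cons_induction with
  | empty => exact ⟨hG.some, hG.some_mem, by simp⟩
  | cons i A hi ih =>
    simp only [Finset.forall_mem_cons] at hf hle hlt ⊢
    obtain ⟨x, hx, hxA⟩ := ih hf.2 hle.2 hlt.2
    obtain ⟨y, hy, hyi⟩ := hlt.1
    have hmid (j : ι) (hj : ConvexOn ℝ G (f j)) :
        f j ((1 / 2 : ℝ) • x + (1 / 2 : ℝ) • y) ≤ 1 / 2 * f j x + 1 / 2 * f j y :=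
      hj.2 hx hy (by norm_num) (by norm_num) (by norm_num)
    refine ⟨(1 / 2 : ℝ) • x + (1 / 2 : ℝ) • y,
      hf.1.1 hx hy (by norm_num) (by norm_num) (by norm_num), ?_, fun j hj => ?_⟩
    · linarith [hmid i hf.1, hle.1 x hx]
    · linarith [hmid j (hf.2 j hj), hxA j hj, hle.2 j hj y hy]

theorem eq_of_isExposed_of_mem_interior {E : Type*} [NormedAddCommGroup E] [NormedSpace ℝ E]
    {A G : Set E} (hG : IsExposed ℝ A G) {z : E} (hzG : z ∈ G) (hz : z ∈ interior A) : G = A := by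
  obtain ⟨l, rfl⟩ := hG ⟨z, hzG⟩
  have hmax : IsLocalMax l z :=
    Filter.mem_of_superset (mem_interior_iff_mem_nhds.1 hz) hzG.2
  have hl : l = 0 := by simpa only [ContinuousLinearMap.fderiv] using hmax.fderiv_eq_zero
  simp [hl]

theorem mem_of_isExposed_of_mem_affineSpan {E : Type*} [AddCommGroup E] [Module ℝ E]
    [TopologicalSpace E] {A G : Set E} (hG : IsExposed ℝ A G) {p : E} (hpA : p ∈ A)
    (hp : p ∈ affineSpan ℝ G) : p ∈ G := by
  obtain ⟨g, hg⟩ := (affineSpan_nonempty ℝ).1 ⟨p, hp⟩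
  obtain ⟨l, rfl⟩ := hG ⟨g, hg⟩
  have hpg : l p = l g := by
    refine affineSpan_induction hp (fun q hq => (hg.2 q hq.1).antisymm (hq.2 g hg.1)) ?_
    intro c u v w hu hv hw
    simp [hu, hv, hw]
  exact ⟨hpA, fun y hy => hpg ▸ hg.2 y hy⟩

section Polytope

variable {E : Type*} [NormedAddCommGroup E] [NormedSpace ℝ E] {S : Set E}

/- A functional separating an extreme point from the hull of the remaining points of `S` exposes
it. -/
theorem isExposed_singleton_of_mem_extremePoints (hS : S.Finite) {v : E}
    (hv : v ∈ (convexHull ℝ S).extremePoints ℝ) : IsExposed ℝ (convexHull ℝ S) {v} := by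
  have hvS : v ∈ S := extremePoints_convexHull_subset hv
  have hv' : v ∉ convexHull ℝ (S \ {v}) := fun h =>
    ((convex_convexHull ℝ S).mem_extremePoints_iff_mem_sdiff_convexHull_sdiff.1 hv).2
      (convexHull_mono (Set.sdiff_subset_sdiff_left (subset_convexHull ℝ S)) h)
  obtain ⟨l, u, hlu, huv⟩ := geometric_hahn_banach_closed_point (convex_convexHull ℝ (S \ {v}))
    (hS.sdiff.isClosed_convexHull ℝ) hv'
  have hlt : ∀ y ∈ convexHull ℝ S, y ≠ v → l y < l v := by
    intro y hy hyv
    rcases (S \ {v}).eq_empty_or_nonempty with hSv | hSv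
    · rw [Set.Subset.antisymm (Set.sdiff_eq_empty.1 hSv) (Set.singleton_subset_iff.2 hvS)] at hy
      exact absurd (by simpa using hy) hyv
    rw [← Set.insert_sdiff_self_of_mem hvS, convexHull_insert hSv, convexJoin_singleton_left] at hy
    obtain ⟨z, hz, a, b, -, hb, hab, rfl⟩ := Set.mem_iUnion₂.1 hy
    obtain rfl : a = 1 - b := by linarith
    have hb0 : b ≠ 0 := by
      rintro rfl
      simp at hyv
    have := mul_lt_mul_of_pos_left ((hlu z hz).trans huv) (hb.lt_of_ne' hb0)
    simp only [map_add, map_smul, smul_eq_mul]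
    linarith
  refine fun _ => ⟨l, Set.ext fun y => ⟨?_, fun hy => ?_⟩⟩
  · rintro rfl
    refine ⟨subset_convexHull ℝ S hvS, fun z hz => ?_⟩
    rcases eq_or_ne z y with rfl | hzy
    exacts [le_rfl, (hlt z hz hzy).le]
  · by_contra hyv
    exact (hlt y hy.1 hyv).not_ge (hy.2 v (subset_convexHull ℝ S hvS))

theorem convexHull_exposedPoints_convexHull (hS : S.Finite) :
    convexHull ℝ ((convexHull ℝ S).exposedPoints ℝ) = convexHull ℝ S := by
  have hfin : ((convexHull ℝ S).extremePoints ℝ).Finite :=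
    hS.subset extremePoints_convexHull_subset
  have hKM := closure_convexHull_extremePoints (hS.isCompact_convexHull ℝ) (convex_convexHull ℝ S)
  rw [(hfin.isClosed_convexHull ℝ).closure_eq] at hKM
  refine Set.Subset.antisymm (convexHull_min exposedPoints_subset (convex_convexHull ℝ S)) ?_
  refine hKM.ge.trans (convexHull_mono fun v hv => ?_)
  exact mem_exposedPoints_iff_exposed_singleton.2 (isExposed_singleton_of_mem_extremePoints hS hv)

end Polytope

section Cone

variable {E : Type*} [AddCommGroup E]

theorem fg_of_isFaceOf {R : Type*} [Semiring R] [PartialOrder R] [IsOrderedRing R] [Module R E]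
    {C F : PointedCone R E} (hF : F.IsFaceOf C) (hC : C.FG) : F.FG := by
  obtain ⟨S, hS⟩ := hC
  have hspan (x : E) (hx : x ∈ C) : x ∈ F → x ∈ PointedCone.hull R (S ∩ F : Set E) := by
    rw [← hS] at hx
    induction hx using Submodule.span_induction with
    | mem x hxS => exact fun hxF => Submodule.subset_span ⟨hxS, hxF⟩
    | zero => exact fun _ => Submodule.zero_mem _
    | add x y hx hy ihx ihy =>
      intro hxy
      rw [hS] at hx hy
      obtain ⟨hxF, hyF⟩ := (hF.add_mem_iff_mem hx hy).1 hxy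
      exact Submodule.add_mem _ (ihx hxF) (ihy hyF)
    | smul c x hx ih =>
      intro hcx
      rw [hS] at hx
      rcases eq_or_lt_of_le c.2 with hc | hc
      · obtain rfl : c = 0 := Subtype.ext hc.symm
        simp
      · exact Submodule.smul_mem _ c
          (ih (hF.mem_of_smul_add_mem hx C.zero_mem hc (by simpa using hcx)))
  refine Submodule.fg_def.2 ⟨S ∩ F, S.finite_toSet.inter_of_left _, le_antisymm ?_ fun x hx => ?_⟩
  · exact Submodule.span_le.2 Set.inter_subset_right
  · exact hspan x (hF.le hx) hx

variable [Module ℝ E] {C : PointedCone ℝ E}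

theorem isFaceOf_inf_ker {f : E →ₗ[ℝ] ℝ} (hf : ∀ x ∈ C, f x ≤ 0) :
    (C ⊓ PointedCone.ofSubmodule (LinearMap.ker f)).IsFaceOf C := by
  refine .of_mem_of_add_mem_left inf_le_left fun {x y} hx hy hxy => ⟨hx, ?_⟩
  have h : f x + f y = 0 := by simpa using hxy.2
  exact le_antisymm (hf x hx) (by linarith [hf y hy])

theorem exists_forall_le_mul_of_fg (hC : C.FG) {f h : E →ₗ[ℝ] ℝ} (hh : ∀ x ∈ C, 0 ≤ h x)
    (hf : ∀ x ∈ C, h x = 0 → f x ≤ 0) : ∃ c : ℝ, ∀ x ∈ C, f x ≤ c * h x := by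
  obtain ⟨S, rfl⟩ := hC
  obtain ⟨c, hc⟩ := (S.finite_toSet.image fun x => f x / h x).bddAbove
  refine ⟨c, fun x hx => ?_⟩
  induction hx using Submodule.span_induction with
  | mem x hxS =>
    have hxC : x ∈ Submodule.span {c : ℝ // 0 ≤ c} (S : Set E) := Submodule.subset_span hxS
    rcases (hh x hxC).eq_or_lt with h0 | h0
    · simpa [← h0] using hf x hxC h0.symm
    · exact (div_le_iff₀ h0).1 (hc ⟨x, hxS, rfl⟩)
  | zero => simp
  | add x y _ _ hx hy => simpa only [map_add, mul_add] using add_le_add hx hy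
  | smul r x _ hx =>
    have := mul_le_mul_of_nonneg_left hx r.2
    change f ((r : ℝ) • x) ≤ c * h ((r : ℝ) • x)
    simp only [map_smul, smul_eq_mul]
    linarith

end Cone

/- The witness for `j` lies on a segment from `p` to a point violating only the `j`-th
inequality. -/
theorem exists_irredundant_subfamily {E ι : Type*} [AddCommGroup E] [Module ℝ E]
    {D : Set E} (hD : Convex ℝ D) (f : ι → E →ₗ[ℝ] ℝ) {p : E} (hp : p ∈ D) (A : Finset ι)
    (hpA : ∀ i ∈ A, f i p < 0) :
    ∃ J ⊆ A, (∀ x ∈ D, (∀ j ∈ J, f j x ≤ 0) → ∀ i ∈ A, f i x ≤ 0) ∧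
      ∀ j ∈ J, ∃ s ∈ D, f j s = 0 ∧ ∀ k ∈ J, k ≠ j → f k s < 0 := by
  classical
  obtain ⟨J, hJA, hJ⟩ := exists_minimal_le_of_wellFoundedLT
    (fun J : Finset ι => ∀ x ∈ D, (∀ j ∈ J, f j x ≤ 0) → ∀ i ∈ A, f i x ≤ 0) A
    (fun x _ h => h)
  refine ⟨J, hJA, hJ.prop, fun j hj => ?_⟩
  obtain ⟨x, hx, hxJ, hxj⟩ : ∃ x ∈ D, (∀ k ∈ J, k ≠ j → f k x ≤ 0) ∧ 0 < f j x := by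
    have hnot := hJ.not_prop_of_lt (Finset.erase_ssubset hj)
    push Not at hnot
    obtain ⟨x, hx, hxJ, i, hi, hxi⟩ := hnot
    have hxJ' (k : ι) (hk : k ∈ J) (hkj : k ≠ j) : f k x ≤ 0 := hxJ k (Finset.mem_erase.2 ⟨hkj, hk⟩)
    refine ⟨x, hx, hxJ', not_le.1 fun hxj => hxi.not_ge (hJ.prop x hx (fun k hk => ?_) i hi)⟩
    rcases eq_or_ne k j with rfl | hkj
    exacts [hxj, hxJ' k hk hkj]
  have hpj := hpA j (hJA hj)
  have hden : 0 < f j x - f j p := by linarith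
  have ha : 0 < f j x / (f j x - f j p) := div_pos hxj hden
  have hb : 0 < -f j p / (f j x - f j p) := div_pos (by linarith) hden
  refine ⟨(f j x / (f j x - f j p)) • p + (-f j p / (f j x - f j p)) • x,
    hD hp hx ha.le hb.le (by field_simp; ring), ?_, fun k hk hkj => ?_⟩
  · simp only [map_add, map_smul, smul_eq_mul]
    field_simp
    ring
  · simp only [map_add, map_smul, smul_eq_mul]
    have h1 := mul_neg_of_pos_of_neg ha (hpA k (hJA hk))
    have h2 := mul_nonpos_of_nonneg_of_nonpos hb.le (hxJ k hk hkj)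
    linarith

end Convexity

section Minkowski

variable {n : ℕ} {v x y : Fin (n + 1) → ℝ} {p q : EuclideanSpace ℝ (Fin n)}

/-- The Minkowski form as a bilinear form. -/
def minkForm : LinearMap.BilinForm ℝ (Fin (n + 1) → ℝ) :=
  LinearMap.mk₂ ℝ mink
    (fun x y z => by simp only [mink, Pi.add_apply, add_mul, Finset.sum_add_distrib]; ring)
    (fun c x y => by simp only [mink, Pi.smul_apply, smul_eq_mul, mul_assoc, mul_add, mul_neg,
      Finset.mul_sum])
    (fun x y z => by simp only [mink, Pi.add_apply, mul_add, Finset.sum_add_distrib]; ring)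
    (fun c x y => by simp only [mink, Pi.smul_apply, smul_eq_mul, mul_left_comm _ c, mul_add,
      mul_neg, Finset.mul_sum])

@[simp]
theorem minkForm_apply (x y : Fin (n + 1) → ℝ) : minkForm x y = mink x y := rfl

theorem mink_comm (x y : Fin (n + 1) → ℝ) : mink x y = mink y x := by
  simp only [mink, mul_comm]

theorem mink_add_right (x y z : Fin (n + 1) → ℝ) : mink x (y + z) = mink x y + mink x z :=
  map_add (minkForm x) y z

theorem mink_sub_right (x y z : Fin (n + 1) → ℝ) : mink x (y - z) = mink x y - mink x z :=
  map_sub (minkForm x) y z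

theorem mink_smul_right (c : ℝ) (x y : Fin (n + 1) → ℝ) : mink x (c • y) = c * mink x y :=
  map_smul (minkForm x) c y

theorem mink_zero_right (x : Fin (n + 1) → ℝ) : mink x 0 = 0 :=
  map_zero (minkForm x)

theorem mink_add_left (x y z : Fin (n + 1) → ℝ) : mink (x + y) z = mink x z + mink y z :=
  LinearMap.map_add₂ minkForm x y z

theorem mink_sub_left (x y z : Fin (n + 1) → ℝ) : mink (x - y) z = mink x z - mink y z :=
  LinearMap.map_sub₂ minkForm x y z

theorem mink_smul_left (c : ℝ) (x y : Fin (n + 1) → ℝ) : mink (c • x) y = c * mink x y :=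
  LinearMap.map_smul₂ minkForm c x y

theorem mink_zero_left (x : Fin (n + 1) → ℝ) : mink 0 x = 0 :=
  LinearMap.map_zero₂ minkForm x

theorem continuous_mink_right (e : Fin (n + 1) → ℝ) : Continuous (mink e) :=
  (minkForm e).continuous_of_finiteDimensional

/-- The spatial part `(x₁, …, xₙ)` of a vector of `ℝ^{n+1}`. -/
def spat : (Fin (n + 1) → ℝ) →ₗ[ℝ] EuclideanSpace ℝ (Fin n) where
  toFun x := WithLp.toLp 2 fun i => x i.succ
  map_add' _ _ := rfl
  map_smul' _ _ := rfl

theorem spat_apply (x : Fin (n + 1) → ℝ) (i : Fin n) : spat x i = x i.succ := rfl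

theorem eq_of_spat_eq (h₀ : x 0 = y 0) (h : spat x = spat y) : x = y := by
  funext i
  exact Fin.cases h₀ (fun j => congrArg (fun u : EuclideanSpace ℝ (Fin n) => u j) h) i

theorem mink_eq (x y : Fin (n + 1) → ℝ) :
    mink x y = -(x 0 * y 0) + inner ℝ (spat x) (spat y) := by
  simp [mink, spat_apply, PiLp.inner_apply, mul_comm]

theorem mink_self (x : Fin (n + 1) → ℝ) : mink x x = ‖spat x‖ ^ 2 - x 0 ^ 2 := by
  rw [mink_eq, real_inner_self_eq_norm_sq]
  ring

theorem spat_ne_zero_of_mink_self_pos (hx : 0 < mink x x) : spat x ≠ 0 := by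
  intro h
  rw [mink_self, h, norm_zero] at hx
  nlinarith [sq_nonneg (x 0)]

section Causal

/-- The cone of future-pointing causal vectors. -/
def causal (n : ℕ) : PointedCone ℝ (Fin (n + 1) → ℝ) where
  carrier := {x | ‖spat x‖ ≤ x 0}
  add_mem' {x y} hx hy := by
    rw [Set.mem_ofPred_eq, map_add]
    exact norm_add_le_of_le hx hy
  zero_mem' := by simp
  smul_mem' c x hx := by
    change ‖spat ((c : ℝ) • x)‖ ≤ c * x 0
    rw [map_smul, norm_smul, Real.norm_of_nonneg c.2]
    exact mul_le_mul_of_nonneg_left hx c.2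

/-- The open cone of future-pointing timelike vectors. -/
def timelike (n : ℕ) : ConvexCone ℝ (Fin (n + 1) → ℝ) where
  carrier := {x | ‖spat x‖ < x 0}
  add_mem' {x} hx {y} hy := by
    rw [Set.mem_ofPred_eq, map_add]
    exact (norm_add_le _ _).trans_lt (add_lt_add hx hy)
  smul_mem' {c} hc {x} hx := by
    rw [Set.mem_ofPred_eq, map_smul, norm_smul, Real.norm_of_nonneg hc.le]
    exact mul_lt_mul_of_pos_left hx hc

theorem mem_causal : x ∈ causal n ↔ ‖spat x‖ ≤ x 0 := Iff.rfl

theorem mem_timelike : x ∈ timelike n ↔ ‖spat x‖ < x 0 := Iff.rfl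

theorem isClosed_causal : IsClosed (causal n : Set (Fin (n + 1) → ℝ)) :=
  isClosed_le (spat.continuous_of_finiteDimensional.norm) (continuous_apply 0)

theorem isOpen_timelike : IsOpen (timelike n : Set (Fin (n + 1) → ℝ)) :=
  isOpen_lt (spat.continuous_of_finiteDimensional.norm) (continuous_apply 0)

theorem causal_of_timelike (hx : x ∈ timelike n) : x ∈ causal n :=
  mem_causal.2 (mem_timelike.1 hx).le

theorem add_mem_timelike (hx : x ∈ timelike n) (hy : y ∈ causal n) : x + y ∈ timelike n := by
  rw [mem_timelike, map_add]
  exact (norm_add_le _ _).trans_lt (add_lt_add_of_lt_of_le (mem_timelike.1 hx) (mem_causal.1 hy))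

theorem pos_of_mem_timelike (hx : x ∈ timelike n) : 0 < x 0 :=
  (norm_nonneg _).trans_lt (mem_timelike.1 hx)

theorem pos_of_mem_causal (hx : x ∈ causal n) (hx0 : x ≠ 0) : 0 < x 0 := by
  have h := mem_causal.1 hx
  refine ((norm_nonneg _).trans h).lt_of_ne fun h0 => hx0 (eq_of_spat_eq h0.symm ?_)
  rw [← h0, norm_le_zero_iff] at h
  rw [h, map_zero]

theorem mink_self_nonpos (hx : x ∈ causal n) : mink x x ≤ 0 := by
  rw [mink_self, sub_nonpos]
  exact pow_le_pow_left₀ (norm_nonneg _) hx 2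

theorem mink_self_neg (hx : x ∈ timelike n) : mink x x < 0 := by
  rw [mink_self, sub_neg]
  exact pow_lt_pow_left₀ hx (norm_nonneg _) two_ne_zero

theorem timelike_of_causal (hx : x ∈ causal n) (h : mink x x < 0) : x ∈ timelike n := by
  rw [mink_self, sub_neg] at h
  exact lt_of_pow_lt_pow_left₀ 2 ((norm_nonneg _).trans hx) h

/- This is the equality case of the Cauchy–Schwarz inequality for the spatial parts. -/
theorem smul_eq_smul_of_mink_nonneg (hx : x ∈ causal n) (hy : y ∈ causal n)
    (h : 0 ≤ mink x y) : y 0 • x = x 0 • y := by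
  rcases eq_or_ne x 0 with rfl | hx0
  · simp
  rcases eq_or_ne y 0 with rfl | hy0
  · simp
  have hx0 := pos_of_mem_causal hx hx0
  have hy0 := pos_of_mem_causal hy hy0
  rw [mem_causal] at hx hy
  rw [mink_eq] at h
  have hxy := real_inner_le_norm (spat x) (spat y)
  have hx' : ‖spat x‖ = x 0 := by nlinarith [norm_nonneg (spat x)]
  have hy' : ‖spat y‖ = y 0 := by nlinarith [norm_nonneg (spat y)]
  rw [hx', hy'] at hxy
  refine eq_of_spat_eq (mul_comm _ _) ?_
  rw [map_smul, map_smul, ← hx', ← hy', ← inner_eq_norm_mul_iff_real, hx', hy']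
  linarith

theorem mink_neg_of_mem_timelike (hx : x ∈ timelike n) (hy : y ∈ causal n) (hy0 : y ≠ 0) :
    mink x y < 0 := by
  by_contra! h
  have hxy := congrArg (mink x) (smul_eq_smul_of_mink_nonneg (causal_of_timelike hx) hy h)
  simp only [mink_smul_right] at hxy
  have := mul_neg_of_pos_of_neg (pos_of_mem_causal hy hy0) (mink_self_neg hx)
  linarith [mul_nonneg (pos_of_mem_timelike hx).le h]

theorem add_mem_timelike_of_mink_neg (hx : x ∈ causal n) (hy : y ∈ causal n)
    (h : mink x y < 0) : x + y ∈ timelike n := by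
  refine timelike_of_causal (add_mem hx hy) ?_
  rw [mink_add_left, mink_add_right, mink_add_right, mink_comm y x]
  linarith [mink_self_nonpos hx, mink_self_nonpos hy]

theorem mem_causal_iff (hv : v ∈ timelike n) :
    x ∈ causal n ↔ mink x x ≤ 0 ∧ mink v x ≤ 0 := by
  constructor
  · intro hx
    refine ⟨mink_self_nonpos hx, ?_⟩
    rcases eq_or_ne x 0 with rfl | hx0
    exacts [(mink_zero_right v).le, (mink_neg_of_mem_timelike hv hx hx0).le]
  · rintro ⟨hxx, hvx⟩
    rw [mink_self, sub_nonpos, sq_le_sq, abs_norm] at hxx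
    rcases le_or_gt 0 (x 0) with h | h
    · rwa [abs_of_nonneg h] at hxx
    · have hneg : (-1 : ℝ) • x ∈ causal n := by
        simpa [mem_causal, abs_of_neg h] using hxx
      have := mink_neg_of_mem_timelike hv hneg (by rintro h0; simp_all)
      rw [mink_smul_right] at this
      linarith

theorem mem_timelike_iff (hv : v ∈ timelike n) :
    x ∈ timelike n ↔ mink x x < 0 ∧ mink v x ≤ 0 :=
  ⟨fun hx => ⟨mink_self_neg hx, ((mem_causal_iff hv).1 (causal_of_timelike hx)).2⟩,
    fun hx => timelike_of_causal ((mem_causal_iff hv).2 ⟨hx.1.le, hx.2⟩) hx.1⟩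

theorem mink_self_pos_of_mink_eq_zero (hv : v ∈ timelike n) (hvx : mink v x = 0)
    (hx : x ≠ 0) : 0 < mink x x := by
  by_contra! h
  exact (mink_neg_of_mem_timelike hv ((mem_causal_iff hv).2 ⟨h, hvx.le⟩) hx).ne hvx

end Causal

section Projection

/-- The orthogonal projection of `x` to the hyperplane orthogonal to `v`. -/
def minkProj (v x : Fin (n + 1) → ℝ) : Fin (n + 1) → ℝ :=
  x - (mink v x / mink v v) • v

theorem mink_minkProj (v x y : Fin (n + 1) → ℝ) :
    mink y (minkProj v x) = mink y x - mink v x / mink v v * mink y v := by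
  rw [minkProj, mink_sub_right, mink_smul_right]

theorem mink_minkProj_self (hv : mink v v ≠ 0) (x : Fin (n + 1) → ℝ) :
    mink v (minkProj v x) = 0 := by
  rw [mink_minkProj, div_mul_cancel₀ _ hv, sub_self]

theorem minkProj_mem_timelike (hv : 0 < mink v v) (hx : x ∈ timelike n) :
    minkProj v x ∈ timelike n := by
  have hxx : mink x (minkProj v x) < 0 := by
    rw [mink_minkProj, mink_comm x v, div_mul_eq_mul_div]
    linarith [mink_self_neg hx, div_nonneg (mul_self_nonneg (mink v x)) hv.le]
  refine (mem_timelike_iff hx).2 ⟨?_, hxx.le⟩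
  rwa [minkProj, mink_sub_left, ← minkProj, mink_smul_left, mink_minkProj_self hv.ne', mul_zero,
    sub_zero]

/-- The Minkowski reflection in the hyperplane orthogonal to `v`. -/
def minkReflection (v : Fin (n + 1) → ℝ) : Module.End ℝ (Fin (n + 1) → ℝ) :=
  Module.preReflection v ((2 / mink v v) • minkForm v)

theorem minkReflection_apply (v x : Fin (n + 1) → ℝ) :
    minkReflection v x = x - (2 / mink v v * mink v x) • v := rfl

theorem involutive_minkReflection (hv : mink v v ≠ 0) : Function.Involutive (minkReflection v) :=
  Module.involutive_preReflection (div_mul_cancel₀ 2 hv)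

theorem mink_minkReflection (hv : mink v v ≠ 0) (x y : Fin (n + 1) → ℝ) :
    mink (minkReflection v x) (minkReflection v y) = mink x y := by
  simp only [minkReflection_apply, mink_sub_left, mink_sub_right, mink_smul_left, mink_smul_right,
    mink_comm x v]
  field

theorem minkReflection_mem_timelike (hv : 0 < mink v v) (hx : x ∈ timelike n) :
    minkReflection v x ∈ timelike n := by
  refine (mem_timelike_iff hx).2 ⟨?_, ?_⟩
  · rw [mink_minkReflection hv.ne']
    exact mink_self_neg hx
  · rw [minkReflection_apply, mink_sub_right, mink_smul_right, mink_comm x v, mul_assoc]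
    linarith [mink_self_neg hx, mul_nonneg (div_nonneg zero_le_two hv.le)
      (mul_self_nonneg (mink v x))]

theorem minkReflection_sub_apply (hxy : mink x x = mink y y)
    (h : mink (x - y) (x - y) ≠ 0) : minkReflection (x - y) x = y := by
  have h2 : mink (x - y) (x - y) = 2 * mink (x - y) x := by
    simp only [mink_sub_left, mink_sub_right, mink_comm x y]
    linarith
  rw [minkReflection_apply, div_mul_eq_mul_div, ← h2, div_self h, one_smul, sub_sub_cancel]

end Projection

section Klein

theorem kleinMap_eq (x : Fin (n + 1) → ℝ) : kleinMap x = (x 0)⁻¹ • spat x := by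
  ext i
  simp [kleinMap, spat_apply, div_eq_inv_mul]

theorem kleinMap_smul {c : ℝ} (hc : c ≠ 0) (x : Fin (n + 1) → ℝ) :
    kleinMap (c • x) = kleinMap x := by
  ext i
  simp [kleinMap, mul_div_mul_left _ _ hc]

/-- The affine section `p ↦ (1, p)` of the Klein projection. -/
def kleinLift : EuclideanSpace ℝ (Fin n) →ᵃ[ℝ] (Fin (n + 1) → ℝ) where
  toFun p := Fin.cons 1 p.ofLp
  linear :=
    { toFun p := Fin.cons 0 p.ofLp
      map_add' p q := eq_of_spat_eq (by simp) rfl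
      map_smul' c p := eq_of_spat_eq (by simp) rfl }
  map_vadd' p q := eq_of_spat_eq (by simp) rfl

@[simp]
theorem kleinLift_zero (p : EuclideanSpace ℝ (Fin n)) : kleinLift p 0 = 1 := rfl

@[simp]
theorem spat_kleinLift (p : EuclideanSpace ℝ (Fin n)) : spat (kleinLift p) = p := rfl

theorem kleinLift_injective : Function.Injective (kleinLift (n := n)) :=
  Function.LeftInverse.injective spat_kleinLift

theorem kleinLift_ne_zero (p : EuclideanSpace ℝ (Fin n)) : kleinLift p ≠ 0 := fun h => by
  simpa using congrFun h 0

@[simp]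
theorem kleinMap_kleinLift (p : EuclideanSpace ℝ (Fin n)) : kleinMap (kleinLift p) = p := by
  simp [kleinMap_eq]

theorem smul_kleinLift_kleinMap (hx : x 0 ≠ 0) : x 0 • kleinLift (kleinMap x) = x :=
  eq_of_spat_eq (by simp) (by simp [kleinMap_eq, hx])

theorem kleinLift_kleinMap (hx : x 0 ≠ 0) : kleinLift (kleinMap x) = (x 0)⁻¹ • x :=
  (eq_inv_smul_iff₀ hx).2 (smul_kleinLift_kleinMap hx)

theorem mink_kleinLift_sub (e : Fin (n + 1) → ℝ) (p q : EuclideanSpace ℝ (Fin n)) :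
    mink e (kleinLift p) - mink e (kleinLift q) = inner ℝ (spat e) (p - q) := by
  simp only [mink_eq, kleinLift_zero, spat_kleinLift, inner_sub_right]
  ring

theorem kleinLift_mem_causal : kleinLift p ∈ causal n ↔ ‖p‖ ≤ 1 := by
  simp [mem_causal]

theorem kleinLift_mem_timelike : kleinLift p ∈ timelike n ↔ ‖p‖ < 1 := by
  simp [mem_timelike]

theorem kleinLift_zero_mem_timelike (n : ℕ) : kleinLift 0 ∈ timelike n :=
  kleinLift_mem_timelike.2 (by simp)

theorem eq_zero_of_forall_mink_eq_zero (h : ∀ y, mink y x = 0) :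
    x = 0 := by
  by_contra hx
  exact (mink_self_pos_of_mink_eq_zero (kleinLift_zero_mem_timelike n) (h _) hx).ne' (h x)

theorem mink_kleinLift_self_eq_zero : mink (kleinLift p) (kleinLift p) = 0 ↔ ‖p‖ = 1 := by
  simp [mink_self, sub_eq_zero, pow_eq_one_iff_of_nonneg]

theorem mink_kleinLift_kleinMap_eq_zero {e : Fin (n + 1) → ℝ} (hx : x 0 ≠ 0) :
    mink e (kleinLift (kleinMap x)) = 0 ↔ mink e x = 0 := by
  rw [kleinLift_kleinMap hx, mink_smul_right, mul_eq_zero, or_iff_right (inv_ne_zero hx)]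

theorem mink_kleinLift_kleinMap_neg {e : Fin (n + 1) → ℝ} (hx : 0 < x 0) (hex : mink e x < 0) :
    mink e (kleinLift (kleinMap x)) < 0 := by
  rw [kleinLift_kleinMap hx.ne', mink_smul_right]
  exact mul_neg_of_pos_of_neg (inv_pos.2 hx) hex

theorem kleinLift_kleinMap_mem_timelike (hx : x ∈ timelike n) :
    kleinLift (kleinMap x) ∈ timelike n := by
  have h0 := pos_of_mem_timelike hx
  rw [kleinLift_kleinMap h0.ne']
  exact (timelike n).smul_mem (inv_pos.2 h0) hx

theorem mink_kleinLift_neg (hp : ‖p‖ ≤ 1) (hq : ‖q‖ ≤ 1) (hpq : p ≠ q) :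
    mink (kleinLift p) (kleinLift q) < 0 := by
  by_contra! h
  have := smul_eq_smul_of_mink_nonneg (kleinLift_mem_causal.2 hp) (kleinLift_mem_causal.2 hq) h
  simp only [kleinLift_zero, one_smul] at this
  exact hpq (kleinLift_injective this)

theorem mem_hyperboloid_iff : x ∈ Hyperboloid n ↔ x ∈ timelike n ∧ mink x x = -1 := by
  refine ⟨fun ⟨hxx, h0⟩ => ⟨?_, hxx⟩, fun ⟨hx, hxx⟩ => ⟨hxx, pos_of_mem_timelike hx⟩⟩
  rw [mink_self] at hxx
  exact lt_of_pow_lt_pow_left₀ 2 h0.le (by linarith)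

theorem exists_smul_mem_hyperboloid (hx : x ∈ timelike n) :
    ∃ c : ℝ, 0 < c ∧ c • x ∈ Hyperboloid n := by
  have hxx : 0 < -mink x x := neg_pos.2 (mink_self_neg hx)
  refine ⟨(√(-mink x x))⁻¹, by positivity, mem_hyperboloid_iff.2
    ⟨(timelike n).smul_mem (by positivity) hx, ?_⟩⟩
  rw [mink_smul_left, mink_smul_right, ← mul_assoc, ← mul_inv, Real.mul_self_sqrt hxx.le,
    inv_neg, neg_mul, inv_mul_cancel₀ (neg_pos.1 hxx).ne]

end Klein

end Minkowski

namespace HypPolyhedron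

section Klein

variable {n : ℕ} {ι : Type*} [Finite ι] {e : ι → Fin (n + 1) → ℝ} {x : Fin (n + 1) → ℝ}

theorem eventually_mem_timelike_and_neg (hx : x ∈ timelike n) (hxe : ∀ i, mink (e i) x < 0) :
    ∀ᶠ y in 𝓝 x, y ∈ timelike n ∧ ∀ i, mink (e i) y < 0 :=
  (isOpen_timelike.eventually_mem hx).and <| eventually_all.2 fun i =>
    (continuous_mink_right (e i)).continuousAt.eventually_lt_const (hxe i)

theorem image_kleinMap_hyperboloid {ι : Type*} (e : ι → Fin (n + 1) → ℝ) :
    kleinMap '' {x ∈ Hyperboloid n | ∀ i, mink (e i) x ≤ 0} =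
      kleinLift ⁻¹' {x | x ∈ timelike n ∧ ∀ i, mink (e i) x ≤ 0} := by
  ext p
  constructor
  · rintro ⟨x, ⟨hx, hxe⟩, rfl⟩
    have ht := (mem_hyperboloid_iff.1 hx).1
    have h0 := pos_of_mem_timelike ht
    refine ⟨kleinLift_kleinMap_mem_timelike ht, fun i => ?_⟩
    rw [kleinLift_kleinMap h0.ne', mink_smul_right]
    exact mul_nonpos_of_nonneg_of_nonpos (inv_nonneg.2 h0.le) (hxe i)
  · rintro ⟨hp, hpe⟩
    obtain ⟨c, hc, hcp⟩ := exists_smul_mem_hyperboloid hp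
    refine ⟨c • kleinLift p, ⟨hcp, fun i => ?_⟩, ?_⟩
    · rw [mink_smul_right]
      exact mul_nonpos_of_nonneg_of_nonpos hc.le (hpe i)
    · rw [kleinMap_smul hc.ne', kleinMap_kleinLift]

theorem kleinMap_mem_interior_image_hyperboloid (hx : x ∈ timelike n)
    (hxe : ∀ i, mink (e i) x < 0) :
    kleinMap x ∈ interior (kleinMap '' {x ∈ Hyperboloid n | ∀ i, mink (e i) x ≤ 0}) := by
  rw [image_kleinMap_hyperboloid, mem_interior_iff_mem_nhds]
  filter_upwards [kleinLift.continuous_of_finiteDimensional.continuousAt.eventually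
    (eventually_mem_timelike_and_neg (kleinLift_kleinMap_mem_timelike hx) fun i =>
      mink_kleinLift_kleinMap_neg (pos_of_mem_timelike hx) (hxe i))] with q hq
  exact ⟨hq.1, fun i => (hq.2 i).le⟩

end Klein

variable {n : ℕ} (P : HypPolyhedron n) {x : Fin (n + 1) → ℝ} {p : EuclideanSpace ℝ (Fin n)}

section Cone

/-- The cone over `P`: the future-pointing causal vectors on which all the normals of `P` are
nonpositive. Its section `x₀ = 1` is `P.cl`, ideal points being its null rays. -/
def cone : PointedCone ℝ (Fin (n + 1) → ℝ) where
  carrier := {x | x ∈ causal n ∧ ∀ i, mink (P.e i) x ≤ 0}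
  add_mem' hx hy := ⟨add_mem hx.1 hy.1, fun i => by
    rw [mink_add_right]
    exact add_nonpos (hx.2 i) (hy.2 i)⟩
  zero_mem' := ⟨zero_mem _, fun i => (mink_zero_right _).le⟩
  smul_mem' c _ hx := ⟨(causal n).smul_mem c.2 hx.1, fun i =>
    (mink_smul_right _ _ _).trans_le (mul_nonpos_of_nonneg_of_nonpos c.2 (hx.2 i))⟩

theorem mem_cone : x ∈ P.cone ↔ x ∈ causal n ∧ ∀ i, mink (P.e i) x ≤ 0 := Iff.rfl

theorem isClosed_cone : IsClosed (P.cone : Set (Fin (n + 1) → ℝ)) := by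
  have h : (P.cone : Set (Fin (n + 1) → ℝ)) =
      (causal n : Set (Fin (n + 1) → ℝ)) ∩ ⋂ i, {x | mink (P.e i) x ≤ 0} := by
    ext x
    simp [mem_cone]
  rw [h]
  exact isClosed_causal.inter <| isClosed_iInter fun i =>
    isClosed_le (continuous_mink_right _) continuous_const

theorem exists_timelike_neg : ∃ x ∈ timelike n, ∀ i, mink (P.e i) x < 0 := by
  obtain ⟨p, hp⟩ := P.nonempty_int
  rw [image_kleinMap_hyperboloid] at hp
  obtain ⟨hpt, hpe⟩ := interior_subset hp
  refine ⟨kleinLift p, hpt, fun i => (hpe i).lt_of_ne fun h0 => ?_⟩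
  obtain ⟨t, ht, ht0⟩ := (((tendsto_add_smul_nhdsGT_zero p (spat (P.e i))).eventually
    (mem_interior_iff_mem_nhds.1 hp)).and self_mem_nhdsWithin).exists
  have hdiff := mink_kleinLift_sub (P.e i) (p + t • spat (P.e i)) p
  rw [add_sub_cancel_left, real_inner_smul_right, h0, sub_zero] at hdiff
  have hspat := spat_ne_zero_of_mink_self_pos ((P.unit i).symm ▸ one_pos)
  exact (ht.2 i).not_gt (hdiff ▸ mul_pos ht0 (real_inner_self_pos.2 hspat))

theorem cl_eq_preimage_cone : P.cl = kleinLift ⁻¹' (P.cone : Set (Fin (n + 1) → ℝ)) := by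
  have himage : kleinMap '' P.carrier ⊆ kleinLift ⁻¹' (P.cone : Set (Fin (n + 1) → ℝ)) := by
    rw [carrier, image_kleinMap_hyperboloid]
    exact fun p hp => ⟨causal_of_timelike hp.1, hp.2⟩
  have hinterior : interior (kleinLift ⁻¹' (P.cone : Set (Fin (n + 1) → ℝ))) ⊆
      kleinMap '' P.carrier := by
    intro p hp
    have hball : p ∈ interior (Metric.closedBall 0 1) := by
      refine interior_mono (fun q hq => ?_) hp
      exact mem_closedBall_zero_iff.2 (kleinLift_mem_causal.1 hq.1)
    rw [interior_closedBall _ one_ne_zero, mem_ball_zero_iff] at hball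
    rw [carrier, image_kleinMap_hyperboloid]
    exact ⟨kleinLift_mem_timelike.2 hball, (interior_subset hp).2⟩
  have hclosed := P.isClosed_cone.preimage kleinLift.continuous_of_finiteDimensional
  refine (closure_minimal himage hclosed).antisymm ?_
  rw [← hclosed.closure_eq, ← (P.cone.convex.lift ℝ |>.affine_preimage
    kleinLift).closure_interior_eq_closure_of_nonempty_interior
      (P.nonempty_int.mono (interior_mono himage))]
  exact closure_mono hinterior

theorem mem_cl_iff : p ∈ P.cl ↔ kleinLift p ∈ P.cone := by
  rw [cl_eq_preimage_cone]
  rfl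

theorem norm_le_one_of_mem_cl (hp : p ∈ P.cl) : ‖p‖ ≤ 1 :=
  kleinLift_mem_causal.1 (P.mem_cl_iff.1 hp).1

theorem kleinMap_mem_cl (hx : x ∈ P.cone) (hx0 : x ≠ 0) : kleinMap x ∈ P.cl := by
  have h0 := pos_of_mem_causal hx.1 hx0
  rw [mem_cl_iff, kleinLift_kleinMap h0.ne']
  exact P.cone.smul_mem (inv_nonneg.2 h0.le) hx

theorem mem_image_carrier_of_norm_lt_one (hp : p ∈ P.cl) (hp1 : ‖p‖ < 1) :
    p ∈ kleinMap '' P.carrier := by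
  rw [carrier, image_kleinMap_hyperboloid]
  exact ⟨kleinLift_mem_timelike.2 hp1, (P.mem_cl_iff.1 hp).2⟩

theorem convex_cl : Convex ℝ P.cl :=
  P.cl_eq_preimage_cone ▸ P.cone.convex.affine_preimage kleinLift

theorem sdim_cl : sdim P.cl = n := by
  have h : (interior (convexHull ℝ P.cl)).Nonempty :=
    P.nonempty_int.mono (interior_mono (subset_closure.trans (subset_convexHull ℝ _)))
  rw [sdim, ← direction_affineSpan, affineSpan_eq_top_of_nonempty_interior h,
    AffineSubspace.direction_top, finrank_top, finrank_euclideanSpace_fin]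

end Cone

section Vertices

theorem verts_eq_exposedPoints : P.verts = P.cl.exposedPoints ℝ :=
  Set.ext fun _ => mem_exposedPoints_iff_exposed_singleton.symm

theorem cone_eq_hull (hP : P.FiniteVolume) :
    P.cone = PointedCone.hull ℝ (kleinLift '' P.verts) := by
  refine le_antisymm (fun x hx => ?_) (Submodule.span_le.2 ?_)
  · rcases eq_or_ne x 0 with rfl | hx0
    · exact zero_mem _
    have h0 := pos_of_mem_causal hx.1 hx0
    have hmem : kleinLift (kleinMap x) ∈ convexHull ℝ (kleinLift '' P.verts) := by
      rw [← AffineMap.image_convexHull, ← hP.2]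
      exact Set.mem_image_of_mem _ (P.kleinMap_mem_cl hx hx0)
    rw [← smul_kleinLift_kleinMap h0.ne']
    exact PointedCone.smul_mem _ h0.le
      (convexHull_min Submodule.subset_span (PointedCone.convex _) hmem)
  · rintro _ ⟨v, hv, rfl⟩
    rw [verts_eq_exposedPoints] at hv
    exact P.mem_cl_iff.1 (exposedPoints_subset hv)

theorem eq_zero_or_mem_hull_of_mem_span {S : Set (Fin (n + 1) → ℝ)} (hS : ∀ x ∈ S, x ∈ causal n)
    (hx : x ∈ PointedCone.hull ℝ S) :
    x = 0 ∨ x ∈ ConvexCone.hull ℝ (kleinLift '' convexHull ℝ (kleinMap '' (S \ {0}))) := by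
  induction hx using Submodule.span_induction with
  | mem x hxS =>
    refine or_iff_not_imp_left.2 fun hx0 => ?_
    have h0 := pos_of_mem_causal (hS x hxS) hx0
    rw [← smul_kleinLift_kleinMap h0.ne']
    refine ConvexCone.smul_mem _ h0 (ConvexCone.subset_hull (Set.mem_image_of_mem _ ?_))
    exact subset_convexHull ℝ _ ⟨x, ⟨hxS, hx0⟩, rfl⟩
  | zero => exact Or.inl rfl
  | add x y _ _ hx hy =>
    rcases hx with rfl | hx
    · rwa [zero_add]
    rcases hy with rfl | hy
    · rw [add_zero]
      exact Or.inr hx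
    · exact Or.inr (ConvexCone.add_mem _ hx hy)
  | smul c x _ hx =>
    rcases c.2.eq_or_lt with hc | hc
    · obtain rfl : c = 0 := Subtype.ext hc.symm
      exact Or.inl (zero_smul _ x)
    · exact hx.imp (fun h => by rw [h, smul_zero]) fun h => ConvexCone.smul_mem _ hc h

theorem cl_eq_convexHull {S : Set (Fin (n + 1) → ℝ)} (hS : P.cone = PointedCone.hull ℝ S) :
    P.cl = convexHull ℝ (kleinMap '' (S \ {0})) := by
  have hSP (x) (hx : x ∈ S) : x ∈ P.cone := hS ▸ Submodule.subset_span hx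
  refine Set.Subset.antisymm (fun p hp => ?_) (convexHull_min ?_ P.convex_cl)
  · have hp' := P.mem_cl_iff.1 hp
    rw [hS] at hp'
    have hmem := (eq_zero_or_mem_hull_of_mem_span (fun x hx => (hSP x hx).1) hp').resolve_left
      (kleinLift_ne_zero p)
    rw [ConvexCone.mem_hull_of_convex ((convex_convexHull ℝ _).affine_image kleinLift)] at hmem
    obtain ⟨c, -, _, ⟨q, hq, rfl⟩, hqp⟩ := hmem
    have hc : c = 1 := by simpa using congrFun hqp 0
    rw [hc] at hqp
    rwa [kleinLift_injective ((one_smul ℝ _).symm.trans hqp)] at hq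
  · rintro _ ⟨x, ⟨hx, hx0⟩, rfl⟩
    exact P.kleinMap_mem_cl (hSP x hx) hx0

theorem finiteVolume_iff_fg : P.FiniteVolume ↔ P.cone.FG := by
  refine ⟨fun hP => Submodule.fg_def.2 ⟨_, hP.1.image _, (P.cone_eq_hull hP).symm⟩, fun hP => ?_⟩
  obtain ⟨S, hS, hSP⟩ := Submodule.fg_def.1 hP
  have hfin : (kleinMap '' (S \ {0})).Finite := hS.sdiff.image _
  have hcl := P.cl_eq_convexHull hSP.symm
  rw [FiniteVolume, verts_eq_exposedPoints, hcl, convexHull_exposedPoints_convexHull hfin]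
  exact ⟨hfin.subset (exposedPoints_subset_extremePoints.trans extremePoints_convexHull_subset),
    rfl⟩

theorem mem_idealVerts_iff : p ∈ P.idealVerts ↔ p ∈ P.cl ∧ ‖p‖ = 1 := by
  rw [idealVerts, verts_eq_exposedPoints]
  refine ⟨fun h => ⟨exposedPoints_subset h.1, h.2⟩, fun ⟨hp, h1⟩ => ⟨⟨hp, innerSL ℝ p, ?_⟩, h1⟩⟩
  intro q hq
  have hdiff := mink_kleinLift_sub (kleinLift p) q p
  rw [mink_kleinLift_self_eq_zero.2 h1, sub_zero, spat_kleinLift, inner_sub_right] at hdiff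
  simp only [innerSL_apply_apply]
  rcases eq_or_ne p q with rfl | hpq
  · exact ⟨le_rfl, fun _ => rfl⟩
  · have := mink_kleinLift_neg h1.le (P.norm_le_one_of_mem_cl hq) hpq
    exact ⟨by linarith, fun h => by linarith⟩

theorem kleinMap_mem_idealVerts (hx : x ∈ P.cone) (hx0 : x ≠ 0) (hxx : mink x x = 0) :
    kleinMap x ∈ P.idealVerts := by
  have h0 := (pos_of_mem_causal hx.1 hx0).ne'
  refine P.mem_idealVerts_iff.2 ⟨P.kleinMap_mem_cl hx hx0, mink_kleinLift_self_eq_zero.1 ?_⟩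
  rw [mink_kleinLift_kleinMap_eq_zero h0, mink_comm, mink_kleinLift_kleinMap_eq_zero h0, hxx]

theorem idealVerts_nonempty (hP : P.FiniteVolume) (hnc : ¬ P.IsCompactPoly) :
    P.idealVerts.Nonempty := by
  by_contra! h
  refine hnc ⟨hP, fun v hv => (P.norm_le_one_of_mem_cl ?_).lt_of_ne fun h1 => ?_⟩
  · rw [verts_eq_exposedPoints] at hv
    exact exposedPoints_subset hv
  · exact (h ▸ (⟨hv, h1⟩ : v ∈ P.idealVerts) : v ∈ (∅ : Set _))

theorem exists_null_mem_cone (hP : P.FiniteVolume) (hnc : ¬ P.IsCompactPoly) :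
    ∃ w ∈ P.cone, w ≠ 0 ∧ mink w w = 0 := by
  obtain ⟨w, hw⟩ := P.idealVerts_nonempty hP hnc
  obtain ⟨hwP, hw1⟩ := P.mem_idealVerts_iff.1 hw
  exact ⟨kleinLift w, P.mem_cl_iff.1 hwP, kleinLift_ne_zero w, mink_kleinLift_self_eq_zero.2 hw1⟩

theorem faceInHyperplane_singleton_of_norm_eq_one (hp : ‖p‖ = 1) (e : Fin (n + 1) → ℝ) :
    P.faceInHyperplane e {p} := by
  rintro x hx rfl
  exact absurd hp (kleinLift_mem_timelike.1
    (kleinLift_kleinMap_mem_timelike (mem_hyperboloid_iff.1 hx.1).1)).ne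

end Vertices

section Faces

/-- The face of `P.cl` cut out by the bounding hyperplanes indexed by `A`. -/
def face (A : Finset (Fin P.m)) : Set (EuclideanSpace ℝ (Fin n)) :=
  {p ∈ P.cl | ∀ i ∈ A, mink (P.e i) (kleinLift p) = 0}

variable {P} {A : Finset (Fin P.m)} {G : Set (EuclideanSpace ℝ (Fin n))}

theorem isExposed_face (A : Finset (Fin P.m)) : IsExposed ℝ P.cl (P.face A) := by
  rintro ⟨s, hs, hsA⟩
  refine ⟨∑ i ∈ A, innerSL ℝ (spat (P.e i)), ?_⟩
  have hdiff (p q : EuclideanSpace ℝ (Fin n)) : (∑ i ∈ A, innerSL ℝ (spat (P.e i))) p -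
      (∑ i ∈ A, innerSL ℝ (spat (P.e i))) q =
        ∑ i ∈ A, mink (P.e i) (kleinLift p) - ∑ i ∈ A, mink (P.e i) (kleinLift q) := by
    rw [← map_sub, ← Finset.sum_sub_distrib, sum_apply]
    simp only [innerSL_apply_apply, mink_kleinLift_sub]
  have hle (q) (hq : q ∈ P.cl) (i) (_ : i ∈ A) : mink (P.e i) (kleinLift q) ≤ 0 :=
    (P.mem_cl_iff.1 hq).2 i
  ext p
  refine and_congr_right fun hp => ⟨fun hpA q hq => ?_, fun hmax => ?_⟩
  · rw [← sub_nonpos, hdiff, Finset.sum_eq_zero hpA, sub_zero]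
    exact Finset.sum_nonpos (hle q hq)
  · have hps := sub_nonpos.2 (hmax s hs)
    rw [hdiff, Finset.sum_eq_zero hsA, zero_sub, neg_nonpos] at hps
    exact (Finset.sum_eq_zero_iff_of_nonpos (hle p hp)).1
      ((Finset.sum_nonpos (hle p hp)).antisymm hps)

theorem vectorSpan_face_le (A : Finset (Fin P.m)) :
    vectorSpan ℝ (P.face A) ≤ (Submodule.span ℝ ((fun i => spat (P.e i)) '' A))ᗮ := by
  rw [vectorSpan_def, Submodule.span_le]
  rintro _ ⟨p, hp, q, hq, rfl⟩
  refine (Submodule.mem_orthogonal _ _).2 fun u hu => ?_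
  induction hu using Submodule.span_induction with
  | mem _ hu =>
    obtain ⟨i, hi, rfl⟩ := hu
    change inner ℝ (spat (P.e i)) (p - q) = 0
    rw [← mink_kleinLift_sub, hp.2 i hi, hq.2 i hi, sub_zero]
  | zero => rw [inner_zero_left]
  | add u v _ _ hu hv => rw [inner_add_left, hu, hv, add_zero]
  | smul c u _ hu => rw [real_inner_smul_left, hu, mul_zero]

theorem finrank_orthogonal_span_spat (hA : LinearIndepOn ℝ (fun i => spat (P.e i)) A) :
    Module.finrank ℝ (Submodule.span ℝ ((fun i => spat (P.e i)) '' A))ᗮ = n - A.card := by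
  have h := Submodule.finrank_add_finrank_orthogonal
    (Submodule.span ℝ ((fun i => spat (P.e i)) '' A))
  rw [Set.image_eq_range, finrank_span_eq_card hA, finrank_euclideanSpace_fin] at h
  simp only [Finset.coe_sort_coe, Fintype.card_coe] at h
  rw [Set.image_eq_range]
  exact Nat.eq_sub_of_add_eq' h

theorem face_mem_faces (hA : LinearIndepOn ℝ (fun i => spat (P.e i)) A) {s}
    (hs : s ∈ P.face A)
    (hnear : ∀ᶠ p in 𝓝 s, (∀ i ∈ A, mink (P.e i) (kleinLift p) = 0) → p ∈ P.cl) :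
    P.face A ∈ P.faces (n - A.card) := by
  refine ⟨isExposed_face A, ⟨s, hs⟩, ?_⟩
  rw [sdim, ← finrank_orthogonal_span_spat hA]
  refine congrArg (fun W : Submodule ℝ (EuclideanSpace ℝ (Fin n)) => Module.finrank ℝ W)
    ((vectorSpan_face_le A).antisymm (le_vectorSpan_of_eventually_mem hs ?_))
  filter_upwards [hnear] with p hp hps
  have htight (i) (hi : i ∈ A) : mink (P.e i) (kleinLift p) = 0 := by
    have hin := (Submodule.mem_orthogonal _ _).1 hps _ (Submodule.subset_span ⟨i, hi, rfl⟩)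
    rwa [← mink_kleinLift_sub, hs.2 i hi, sub_zero] at hin
  exact ⟨hp htight, htight⟩

theorem convexOn_mink_kleinLift (e : Fin (n + 1) → ℝ) (hG : Convex ℝ G) :
    ConvexOn ℝ G fun p => mink e (kleinLift p) :=
  (((minkForm e).convexOn convex_univ).comp_affineMap kleinLift).subset (Set.subset_univ _) hG

/- Otherwise averaging points of `G` would produce an interior point of `P.cl` in `G`. -/
theorem exists_subset_face_of_isExposed (hG : IsExposed ℝ P.cl G) (hnt : G.Nontrivial)
    (hne : G ≠ P.cl) : ∃ i, G ⊆ P.face {i} := by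
  by_contra! h
  have hconv := hG.convex P.convex_cl
  have hle (i) (x) (hx : x ∈ G) : mink (P.e i) (kleinLift x) ≤ 0 :=
    (P.mem_cl_iff.1 (hG.subset hx)).2 i
  have hlt (i) : ∃ x ∈ G, mink (P.e i) (kleinLift x) < 0 := by
    obtain ⟨x, hx, hxi⟩ := Set.not_subset.1 (h i)
    refine ⟨x, hx, (hle i x hx).lt_of_ne fun h0 => hxi ⟨hG.subset hx, ?_⟩⟩
    simpa using h0
  obtain ⟨z, hz, hzneg⟩ := exists_forall_neg_of_convexOn hnt.nonempty Finset.univ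
    (fun i _ => convexOn_mink_kleinLift (P.e i) hconv) (fun i _ => hle i) fun i _ => hlt i
  obtain ⟨q, hq, hqz⟩ := hnt.exists_ne z
  have hhalf : (0 : ℝ) < 1 / 2 := by norm_num
  have hsum : (1 / 2 + 1 / 2 : ℝ) = 1 := add_halves 1
  have hnorm : ‖(1 / 2 : ℝ) • z + (1 / 2 : ℝ) • q‖ < 1 :=
    norm_combo_lt_of_ne (P.norm_le_one_of_mem_cl (hG.subset hz))
      (P.norm_le_one_of_mem_cl (hG.subset hq)) hqz.symm hhalf hhalf hsum
  have hneg (i) : mink (P.e i) (kleinLift ((1 / 2 : ℝ) • z + (1 / 2 : ℝ) • q)) < 0 := by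
    have := (convexOn_mink_kleinLift (P.e i) hconv).2 hz hq hhalf.le hhalf.le hsum
    simp only [smul_eq_mul] at this
    linarith [hzneg i (Finset.mem_univ i), hle i q hq]
  have hinter := kleinMap_mem_interior_image_hyperboloid (kleinLift_mem_timelike.2 hnorm) hneg
  rw [kleinMap_kleinLift] at hinter
  exact hne (eq_of_isExposed_of_mem_interior hG (hconv hz hq hhalf.le hhalf.le hsum)
    (interior_mono subset_closure hinter))

theorem linearIndepOn_spat_singleton (i : Fin P.m) :
    LinearIndepOn ℝ (fun i => spat (P.e i)) (({i} : Finset (Fin P.m)) : Set (Fin P.m)) := by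
  rw [Finset.coe_singleton]
  exact .singleton (spat_ne_zero_of_mink_self_pos ((P.unit i).symm ▸ one_pos))

theorem nontrivial_of_sdim_pos (hG : 0 < sdim G) : G.Nontrivial := by
  by_contra h
  rw [sdim, vectorSpan_of_subsingleton ℝ (Set.not_nontrivial_iff.1 h), finrank_bot] at hG
  exact hG.false

theorem exists_eq_face_of_mem_faces (hn : 2 ≤ n) (hG : G ∈ P.faces (n - 1)) :
    ∃ i, G = P.face {i} := by
  obtain ⟨hexp, hne, hdim⟩ := hG
  have hnt : G.Nontrivial := nontrivial_of_sdim_pos (by omega)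
  have hGcl : G ≠ P.cl := by
    rintro rfl
    rw [P.sdim_cl] at hdim
    omega
  obtain ⟨i, hi⟩ := exists_subset_face_of_isExposed hexp hnt hGcl
  refine ⟨i, hi.antisymm fun p hp => mem_of_isExposed_of_mem_affineSpan hexp hp.1 ?_⟩
  have hspan : vectorSpan ℝ (P.face {i}) ≤ vectorSpan ℝ G := by
    refine (vectorSpan_face_le {i}).trans_eq (Submodule.eq_of_le_of_finrank_eq
      ((vectorSpan_mono ℝ hi).trans (vectorSpan_face_le {i})) ?_).symm
    rw [finrank_orthogonal_span_spat (linearIndepOn_spat_singleton i)]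
    exact hdim
  obtain ⟨g, hg⟩ := hne
  have hpg := hspan (vsub_mem_vectorSpan ℝ hp (hi hg))
  rw [← direction_affineSpan] at hpg
  simpa using AffineSubspace.vadd_mem_of_mem_direction hpg (subset_affineSpan ℝ G hg)

theorem faces_subset_range_face (hn : 2 ≤ n) :
    P.faces (n - 1) ⊆ Set.range fun i => P.face {i} := fun _ hG =>
  (exists_eq_face_of_mem_faces hn hG).imp fun _ h => h.symm

theorem finite_faces (hn : 2 ≤ n) : (P.faces (n - 1)).Finite :=
  (Set.finite_range _).subset (faces_subset_range_face hn)

theorem a_le_m (hn : 2 ≤ n) : P.a (n - 1) ≤ P.m := by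
  refine (Set.ncard_le_ncard (faces_subset_range_face hn) (Set.finite_range _)).trans ?_
  rw [← Set.image_univ]
  exact (Set.ncard_image_le (Set.toFinite _)).trans (by simp [Set.ncard_univ])

end Faces

end HypPolyhedron

section LinearIndependence

variable {n : ℕ} {ι : Type*} {s : Fin (n + 1) → ℝ}

theorem linearIndepOn_spat_of_mink_eq_zero {v : ι → Fin (n + 1) → ℝ} {A : Set ι}
    (hv : LinearIndepOn ℝ v A) (hs : s ∈ timelike n) (hvs : ∀ i ∈ A, mink (v i) s = 0) :
    LinearIndepOn ℝ (fun i => spat (v i)) A := by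
  refine hv.map_injOn spat fun x hx y hy hxy => ?_
  have horth {z} (hz : z ∈ Submodule.span ℝ (v '' A)) : mink s z = 0 := by
    have hle : Submodule.span ℝ (v '' A) ≤ LinearMap.ker (minkForm s) := by
      rw [Submodule.span_le]
      rintro _ ⟨i, hi, rfl⟩
      exact (mink_comm _ _).trans (hvs i hi)
    exact hle hz
  have hsub : mink s (x - y) = 0 := by rw [mink_sub_right, horth hx, horth hy, sub_zero]
  rw [mink_eq, map_sub, hxy, sub_self, inner_zero_right, add_zero, neg_eq_zero, mul_eq_zero] at hsub
  exact eq_of_spat_eq (sub_eq_zero.1 (hsub.resolve_left (pos_of_mem_timelike hs).ne')) hxy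

theorem linearIndepOn_pair_of_mink_ne_zero {v : ι → Fin (n + 1) → ℝ} {a b : ι}
    {r : Fin (n + 1) → ℝ} (hab : a ≠ b) (ha : v a ≠ 0) (har : mink (v a) r = 0)
    (hbr : mink (v b) r ≠ 0) : LinearIndepOn ℝ v {a, b} := by
  rw [LinearIndepOn.pair_iff v hab]
  intro c d hcd
  have hd : d = 0 := by
    have h := congrArg (fun x => mink x r) hcd
    simpa only [mink_add_left, mink_smul_left, har, mul_zero, zero_add, mink_zero_left,
      mul_eq_zero, hbr, or_false] using h
  rw [hd, zero_smul, add_zero, smul_eq_zero] at hcd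
  exact ⟨hcd.resolve_right ha, hd⟩

end LinearIndependence

namespace HypPolyhedron

variable {n : ℕ} {P : HypPolyhedron n} {J : Finset (Fin P.m)} {a b : Fin P.m}
  {e r s w x : Fin (n + 1) → ℝ}

theorem ne_zero (P : HypPolyhedron n) (i : Fin P.m) : P.e i ≠ 0 := fun h => by
  simpa [h, mink_zero_right] using P.unit i

section TightPoints

variable {A : Finset (Fin P.m)}

theorem kleinMap_mem_face (hx : x ∈ timelike n) (hxP : ∀ i, mink (P.e i) x ≤ 0)
    (hxA : ∀ i ∈ A, mink (P.e i) x = 0) : kleinMap x ∈ P.face A :=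
  have h0 := (pos_of_mem_timelike hx).ne'
  ⟨P.kleinMap_mem_cl ⟨causal_of_timelike hx, hxP⟩ (ne_of_apply_ne (· 0) h0),
    fun i hi => (mink_kleinLift_kleinMap_eq_zero h0).2 (hxA i hi)⟩

theorem face_mem_faces_of_mem_timelike (hA : LinearIndepOn ℝ P.e A) (hs : s ∈ timelike n)
    (hsA : ∀ i ∈ A, mink (P.e i) s = 0) (hsJ : ∀ j ∈ J, j ∉ A → mink (P.e j) s < 0)
    (hJ : ∀ x ∈ timelike n, (∀ i ∈ A, mink (P.e i) x = 0) → (∀ j ∈ J, mink (P.e j) x ≤ 0) →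
      ∀ i, mink (P.e i) x ≤ 0) :
    P.face A ∈ P.faces (n - A.card) := by
  have hsP := hJ s hs hsA fun j hj => by
    by_cases hjA : j ∈ A
    · exact (hsA j hjA).le
    · exact (hsJ j hj hjA).le
  have hneg (j : {j // j ∈ J ∧ j ∉ A}) : mink (P.e j) (kleinLift (kleinMap s)) < 0 :=
    mink_kleinLift_kleinMap_neg (pos_of_mem_timelike hs) (hsJ j j.2.1 j.2.2)
  refine face_mem_faces (linearIndepOn_spat_of_mink_eq_zero hA hs hsA)
    (kleinMap_mem_face hs hsP hsA) ?_
  filter_upwards [kleinLift.continuous_of_finiteDimensional.continuousAt.eventually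
    (eventually_mem_timelike_and_neg (kleinLift_kleinMap_mem_timelike hs) hneg)] with p hp hpA
  refine P.mem_cl_iff.2 ⟨causal_of_timelike hp.1, hJ _ hp.1 hpA fun j hj => ?_⟩
  by_cases hjA : j ∈ A
  · exact (hpA j hjA).le
  · exact (hp.2 ⟨j, hj, hjA⟩).le

theorem IsRightAngled.mink_eq_zero_of_mem_timelike (hra : P.IsRightAngled) (hab : a ≠ b)
    (har : mink (P.e a) r = 0) (hbr : mink (P.e b) r ≠ 0) (hs : s ∈ timelike n)
    (has : mink (P.e a) s = 0) (hbs : mink (P.e b) s = 0)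
    (hsJ : ∀ j ∈ J, j ≠ a → j ≠ b → mink (P.e j) s < 0)
    (hJ : ∀ x ∈ timelike n, mink (P.e a) x = 0 → (∀ j ∈ J, mink (P.e j) x ≤ 0) →
      ∀ i, mink (P.e i) x ≤ 0) :
    mink (P.e a) (P.e b) = 0 := by
  have hli : LinearIndepOn ℝ P.e ({a, b} : Finset (Fin P.m)) := by
    rw [Finset.coe_pair]
    exact linearIndepOn_pair_of_mink_ne_zero hab (P.ne_zero a) har hbr
  have hface : P.face {a, b} ∈ P.faces (n - 2) := by
    rw [← Finset.card_pair hab]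
    refine face_mem_faces_of_mem_timelike hli hs (by simp [has, hbs])
      (fun j hj hjA => ?_) fun x hx hxA => hJ x hx (hxA a (by simp))
    simp only [Finset.mem_insert, Finset.mem_singleton, not_or] at hjA
    exact hsJ j hj hjA.1 hjA.2
  have hin (i) (hi : i ∈ ({a, b} : Finset (Fin P.m))) :
      P.faceInHyperplane (P.e i) (P.face {a, b}) := fun x hx hxF =>
    (mink_kleinLift_kleinMap_eq_zero hx.1.2.ne').1 (hxF.2 i hi)
  exact hra a b hab ⟨_, hface, hin a (by simp), hin b (by simp)⟩

end TightPoints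

/-- `J` indexes an irredundant subfamily of the half-spaces defining `P`: it still cuts out `P`, and
each of its hyperplanes has a point of `P` lying on no other hyperplane of the subfamily. -/
structure IsIrredundant (P : HypPolyhedron n) (J : Finset (Fin P.m)) : Prop where
  nonpos : ∀ x ∈ timelike n, (∀ j ∈ J, mink (P.e j) x ≤ 0) → ∀ i, mink (P.e i) x ≤ 0
  exists_mem : ∀ j ∈ J, ∃ s ∈ timelike n, mink (P.e j) s = 0 ∧
    ∀ k ∈ J, k ≠ j → mink (P.e k) s < 0

theorem exists_isIrredundant (P : HypPolyhedron n) : ∃ J, P.IsIrredundant J := by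
  obtain ⟨p, hp, hpe⟩ := P.exists_timelike_neg
  obtain ⟨J, -, hcut, hmem⟩ := exists_irredundant_subfamily (timelike n).convex
    (fun i => minkForm (P.e i)) hp Finset.univ fun i _ => hpe i
  exact ⟨J, fun x hx hxJ i => hcut x hx hxJ i (Finset.mem_univ i), hmem⟩

theorem exists_neg_mink_le_mul (hP : P.cone.FG) (hw : w ∈ P.cone) (hw0 : w ≠ 0)
    (hww : mink w w = 0) (hew : mink e w = 0) :
    ∃ c : ℝ, ∀ x ∈ P.cone, -mink e x ≤ c * -mink w x := by
  have hnull {x} (hx : x ∈ P.cone) (hwx : 0 ≤ mink w x) (f) (hf : mink f w = 0) :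
      mink f x = 0 := by
    have h := congrArg (mink f) (smul_eq_smul_of_mink_nonneg hw.1 hx.1 hwx)
    rw [mink_smul_right, mink_smul_right, hf, mul_zero] at h
    exact (mul_eq_zero.1 h.symm).resolve_left (pos_of_mem_causal hw.1 hw0).ne'
  refine exists_forall_le_mul_of_fg hP (f := -minkForm e) (h := -minkForm w) (fun x hx => ?_)
    fun x hx hwx => (neg_eq_zero.2 (hnull hx (neg_eq_zero.1 hwx).ge e hew)).le
  by_contra! hwx
  exact hwx.ne (neg_eq_zero.2 (hnull hx (neg_neg_iff_pos.1 hwx).le w hww))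

namespace IsIrredundant

theorem card_le_a (hJ : P.IsIrredundant J) (hn : 2 ≤ n) : J.card ≤ P.a (n - 1) := by
  rw [a, ← Set.ncard_coe_finset]
  refine Set.ncard_le_ncard_of_injOn (fun j => P.face {j}) (fun j hj => ?_)
    (fun j hj k hk hjk => ?_) (finite_faces hn)
  · obtain ⟨s, hs, hjs, hJs⟩ := hJ.exists_mem j hj
    rw [← Finset.card_singleton j]
    refine face_mem_faces_of_mem_timelike ?_ hs (by simpa using hjs)
      (fun i hi hij => hJs i hi (by simpa using hij)) fun x hx _ => hJ.nonpos x hx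
    rw [Finset.coe_singleton]
    exact .singleton (P.ne_zero j)
  · by_contra! hne
    obtain ⟨s, hs, hjs, hJs⟩ := hJ.exists_mem j hj
    have hsP := hJ.nonpos s hs fun i hi => by
      rcases eq_or_ne i j with rfl | hij
      · exact hjs.le
      · exact (hJs i hi hij).le
    have hmem : kleinMap s ∈ P.face {j} := kleinMap_mem_face hs hsP (by simpa using hjs)
    rw [show P.face {j} = P.face {k} from hjk] at hmem
    exact (hJs k hk hne.symm).ne
      ((mink_kleinLift_kleinMap_eq_zero (pos_of_mem_timelike hs).ne').1
        (hmem.2 k (Finset.mem_singleton_self k)))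

section RightAngled

theorem nonpos_of_orthogonal (hJ : P.IsIrredundant J) (hra : P.IsRightAngled) (ha : a ∈ J)
    (hx : x ∈ timelike n) (hax : mink (P.e a) x = 0)
    (hxJ : ∀ b ∈ J, b ≠ a → mink (P.e a) (P.e b) = 0 → mink (P.e b) x ≤ 0) (i : Fin P.m) :
    mink (P.e i) x ≤ 0 := by
  obtain ⟨r, hr, har, hJr⟩ := hJ.exists_mem a ha
  have hD : Convex ℝ ((timelike n : Set (Fin (n + 1) → ℝ)) ∩ LinearMap.ker (minkForm (P.e a))) :=
    (timelike n).convex.inter (Submodule.convex _)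
  obtain ⟨J', hJ', hcut, hmem⟩ := exists_irredundant_subfamily hD
    (fun i => minkForm (P.e i)) ⟨hr, har⟩ (J.erase a) fun i hi =>
      hJr i (Finset.mem_of_mem_erase hi) (Finset.ne_of_mem_erase hi)
  have hcutP (y) (hy : y ∈ timelike n) (hay : mink (P.e a) y = 0)
      (hyJ' : ∀ j ∈ J', mink (P.e j) y ≤ 0) : ∀ i, mink (P.e i) y ≤ 0 := by
    refine hJ.nonpos y hy fun j hj => ?_
    rcases eq_or_ne j a with rfl | hja
    · exact hay.le
    · exact hcut y ⟨hy, hay⟩ hyJ' j (Finset.mem_erase.2 ⟨hja, hj⟩)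
  refine hcutP x hx hax (fun b hb => ?_) i
  obtain ⟨hba, hbJ⟩ := Finset.mem_erase.1 (hJ' hb)
  obtain ⟨s, ⟨hs, has⟩, hbs, hJ's⟩ := hmem b hb
  exact hxJ b hbJ hba <| hra.mink_eq_zero_of_mem_timelike hba.symm har (hJr b hbJ hba).ne hs has
    hbs (fun j hj _ => hJ's j hj) hcutP

/- The projection to `H_a` of a point of the facet on `H_b` stays in `P`, because all the walls
cutting out the facet on `H_a` are orthogonal to `H_a`. -/
theorem mink_nonpos (hJ : P.IsIrredundant J) (hra : P.IsRightAngled) (ha : a ∈ J) (hb : b ∈ J)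
    (hab : a ≠ b) : mink (P.e a) (P.e b) ≤ 0 := by
  obtain ⟨r, hr, hbr, hJr⟩ := hJ.exists_mem b hb
  have hunit := P.unit a
  have h := hJ.nonpos_of_orthogonal hra ha (minkProj_mem_timelike (hunit ▸ one_pos) hr)
    (mink_minkProj_self (hunit ▸ one_ne_zero) r) (fun k hk _ hak => ?_) b
  · rw [mink_minkProj, hbr, hunit, div_one, zero_sub, neg_nonpos, mink_comm (P.e b)] at h
    exact nonpos_of_mul_nonneg_right h (hJr a ha hab)
  · rw [mink_minkProj, mink_comm (P.e k) (P.e a), hak, mul_zero, sub_zero]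
    rcases eq_or_ne k b with rfl | hkb
    · exact hbr.le
    · exact (hJr k hk hkb).le

/- Projecting a point of the facet on `H_a` to `H_b` inside `H_a` produces a point that lies on
`H_a` and `H_b` only, so these two walls share an `(n - 2)`-face. -/
theorem mink_eq_zero (hJ : P.IsIrredundant J) (hra : P.IsRightAngled) (ha : a ∈ J) (hb : b ∈ J)
    (hab : a ≠ b) (hx : x ∈ timelike n) (hax : mink (P.e a) x = 0) (hbx : mink (P.e b) x = 0) :
    mink (P.e a) (P.e b) = 0 := by
  obtain ⟨r, hr, har, hJr⟩ := hJ.exists_mem a ha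
  have hbr := hJr b hb hab.symm
  have hg := hJ.mink_nonpos hra ha hb hab
  set g := mink (P.e a) (P.e b)
  set c := minkProj (P.e a) (P.e b)
  have hmink_c (y) : mink c y = mink (P.e b) y - g * mink (P.e a) y := by
    rw [mink_comm c, mink_minkProj, P.unit, div_one, mink_comm y, mink_comm y]
  have hac : mink (P.e a) c = 0 := mink_minkProj_self (P.unit a ▸ one_ne_zero) _
  have hcr : mink c r < 0 := by rwa [hmink_c, har, mul_zero, sub_zero]
  have hcc : 0 < mink c c := by
    refine mink_self_pos_of_mink_eq_zero hx ?_ fun hc0 => hcr.ne (hc0 ▸ mink_zero_left r)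
    rw [mink_comm, hmink_c, hax, hbx, mul_zero, sub_zero]
  set y := minkProj c r
  have hay : mink (P.e a) y = 0 := by rw [mink_minkProj, har, hac, mul_zero, sub_zero]
  have hby : mink (P.e b) y = 0 := by
    have hcy : mink c y = 0 := mink_minkProj_self hcc.ne' r
    rwa [hmink_c, hay, mul_zero, sub_zero] at hcy
  refine hra.mink_eq_zero_of_mem_timelike hab har hbr.ne (minkProj_mem_timelike hcc hr) hay hby
    (fun k hk hka hkb => ?_) fun z hz _ => hJ.nonpos z hz
  have hkc : mink (P.e k) c ≤ 0 := by
    rw [mink_comm, hmink_c, mink_comm, sub_nonpos]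
    exact (hJ.mink_nonpos hra hk hb hkb).trans
      (mul_nonneg_of_nonpos_of_nonpos hg (hJ.mink_nonpos hra ha hk hka.symm))
  rw [mink_minkProj, sub_neg]
  exact (hJr k hk hka).trans_le (mul_nonneg_of_nonpos_of_nonpos
    (div_nonpos_of_nonpos_of_nonneg hcr.le hcc.le) hkc)

theorem mem_cone_of_orthogonal (hJ : P.IsIrredundant J) (hra : P.IsRightAngled) (ha : a ∈ J)
    (hx : x ∈ causal n) (hax : mink (P.e a) x = 0)
    (hxJ : ∀ b ∈ J, mink (P.e a) (P.e b) = 0 → mink (P.e b) x ≤ 0) : x ∈ P.cone := by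
  obtain ⟨r, hr, har, hJr⟩ := hJ.exists_mem a ha
  refine mem_of_forall_pos_add_smul_mem P.isClosed_cone (v := r) fun t ht => ?_
  have ht' : x + t • r ∈ timelike n :=
    add_comm (t • r) x ▸ add_mem_timelike ((timelike n).smul_mem ht hr) hx
  refine ⟨causal_of_timelike ht', hJ.nonpos_of_orthogonal hra ha ht' ?_ fun b hb hba hab => ?_⟩
  · rw [mink_add_right, mink_smul_right, har, hax, mul_zero, add_zero]
  · rw [mink_add_right, mink_smul_right]
    exact add_nonpos (hxJ b hb hab) (mul_nonpos_of_nonneg_of_nonpos ht.le (hJr b hb hba).le)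

end RightAngled

section IdealVertices

theorem exists_add_smul_mem_cone (hJ : P.IsIrredundant J) (hw : w ∈ P.cone) {d : Fin (n + 1) → ℝ}
    (hwd : mink w d < 0) (hJd : ∀ j ∈ J, mink (P.e j) w = 0 → mink (P.e j) d ≤ 0) :
    ∃ t > (0 : ℝ), w + t • d ∈ P.cone := by
  obtain ⟨u, hu, -⟩ := P.exists_timelike_neg
  have hw0 : w ≠ 0 := fun h => hwd.ne (h ▸ mink_zero_left d)
  have hlim := tendsto_add_smul_nhdsGT_zero w d
  have hneg {f : Fin (n + 1) → ℝ} (hf : mink f w < 0) : ∀ᶠ t in 𝓝[>] (0 : ℝ),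
      mink f (w + t • d) < 0 :=
    hlim.eventually ((continuous_mink_right f).continuousAt.eventually_lt_const hf)
  have hJneg : ∀ᶠ t in 𝓝[>] (0 : ℝ), ∀ j ∈ J, mink (P.e j) w ≠ 0 →
      mink (P.e j) (w + t • d) < 0 :=
    J.eventually_all.2 fun j _ => eventually_imp_distrib_left.2 fun hj =>
      hneg ((hw.2 j).lt_of_ne hj)
  have hself : ∀ᶠ t in 𝓝[>] (0 : ℝ), mink d (w + t • d) < 0 := hneg (mink_comm w d ▸ hwd)
  obtain ⟨t, ⟨⟨hut, hJt⟩, hst⟩, ht⟩ := (((hneg (mink_neg_of_mem_timelike hu hw.1 hw0)).and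
    hJneg).and hself |>.and self_mem_nhdsWithin).exists
  have hyt : w + t • d ∈ timelike n := by
    refine (mem_timelike_iff hu).2 ⟨?_, hut.le⟩
    rw [mink_add_left, mink_smul_left, mink_add_right, mink_smul_right]
    linarith [mink_self_nonpos hw.1, mul_neg_of_pos_of_neg ht hwd, mul_neg_of_pos_of_neg ht hst]
  refine ⟨t, ht, causal_of_timelike hyt, hJ.nonpos _ hyt fun j hj => ?_⟩
  by_cases hjw : mink (P.e j) w = 0
  · rw [mink_add_right, hjw, zero_add, mink_smul_right]
    exact mul_nonpos_of_nonneg_of_nonpos (le_of_lt ht) (hJd j hj hjw)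
  · exact (hJt j hj hjw).le

/- Otherwise `P` contains points near the ideal point `w` in directions close to `-e`; along these
`⟨e, ·⟩` is not dominated by the height `-⟨w, ·⟩`, whereas on a finitely generated cone it is. -/
theorem exists_mink_neg (hJ : P.IsIrredundant J) (hP : P.cone.FG) (hw : w ∈ P.cone) (hw0 : w ≠ 0)
    (hww : mink w w = 0) (hew : mink e w = 0) (hee : 0 < mink e e) :
    ∃ j ∈ J, mink (P.e j) w = 0 ∧ mink (P.e j) e < 0 := by
  by_contra! hcon
  obtain ⟨c, hc⟩ := exists_neg_mink_le_mul hP hw hw0 hww hew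
  obtain ⟨u, hu, hPu⟩ := P.exists_timelike_neg
  have hwu : mink w u < 0 := mink_comm u w ▸ mink_neg_of_mem_timelike hu hw.1 hw0
  have hbound (ε : ℝ) (hε : 0 < ε) : mink e e ≤ ε * (mink e u - c * mink w u) := by
    have hwd : mink w (ε • u - e) < 0 := by
      rw [mink_sub_right, mink_smul_right, mink_comm w e, hew, sub_zero]
      exact mul_neg_of_pos_of_neg hε hwu
    have hJd (j) (hj : j ∈ J) (hjw : mink (P.e j) w = 0) : mink (P.e j) (ε • u - e) ≤ 0 := by
      rw [mink_sub_right, mink_smul_right, sub_nonpos]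
      exact (mul_nonpos_of_nonneg_of_nonpos hε.le (hPu j).le).trans (hcon j hj hjw)
    obtain ⟨t, ht, hmem⟩ := hJ.exists_add_smul_mem_cone hw hwd hJd
    have h := hc _ hmem
    simp only [mink_add_right, mink_smul_right, mink_sub_right, hew, hww, mink_comm w e,
      zero_add, sub_zero] at h
    refine le_of_mul_le_mul_left ?_ ht
    linarith
  have hlim : Tendsto (fun ε : ℝ => ε * (mink e u - c * mink w u)) (𝓝[>] 0) (𝓝 0) := by
    simpa using (continuous_mul_const (mink e u - c * mink w u)).continuousWithinAt.tendsto
      (x := 0)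
  exact hee.not_ge (ge_of_tendsto hlim (eventually_mem_nhdsWithin.mono hbound))

theorem exists_mink_eq_zero (hJ : P.IsIrredundant J) (hn : 2 ≤ n) (hP : P.cone.FG)
    (hw : w ∈ P.cone) (hw0 : w ≠ 0) (hww : mink w w = 0) : ∃ a ∈ J, mink (P.e a) w = 0 := by
  have hrank := Submodule.finrank_add_finrank_orthogonal (Submodule.span ℝ {spat w})
  have hspan : Module.finrank ℝ (Submodule.span ℝ {spat w}) ≤ 1 :=
    (finrank_span_le_card _).trans_eq (by simp)
  rw [finrank_euclideanSpace_fin] at hrank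
  obtain ⟨⟨u, hu⟩, hu0⟩ := Module.finrank_pos_iff_exists_ne_zero.1
    (by omega : 0 < Module.finrank ℝ (Submodule.span ℝ {spat w})ᗮ)
  rw [Submodule.mem_orthogonal_singleton_iff_inner_left] at hu
  set e : Fin (n + 1) → ℝ := kleinLift u - kleinLift 0
  have he₀ : e 0 = 0 := sub_self 1
  have he : spat e = u := sub_zero u
  have hew : mink e w = 0 := by rw [mink_eq, he₀, he, hu, zero_mul, neg_zero, add_zero]
  have hee : 0 < mink e e := by
    rw [mink_eq, he₀, he, zero_mul, neg_zero, zero_add, real_inner_self_pos]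
    exact fun h => hu0 (Subtype.ext h)
  obtain ⟨a, ha, haw, -⟩ := hJ.exists_mink_neg hP hw hw0 hww hew hee
  exact ⟨a, ha, haw⟩

end IdealVertices

end IsIrredundant

end HypPolyhedron

section HyperplaneChart

variable {k : ℕ} {e v : Fin (k + 2) → ℝ} {φ : (Fin (k + 1) → ℝ) →ₗ[ℝ] (Fin (k + 2) → ℝ)}

/-- `φ` identifies the Minkowski space `ℝ^{k+1}`, with its time orientation, with the hyperplane
orthogonal to `e` in `ℝ^{k+2}`. -/
structure IsHyperplaneChart (e : Fin (k + 2) → ℝ)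
    (φ : (Fin (k + 1) → ℝ) →ₗ[ℝ] (Fin (k + 2) → ℝ)) : Prop where
  mink_map : ∀ x y, mink (φ x) (φ y) = mink x y
  range_eq : LinearMap.range φ = LinearMap.ker (minkForm e)
  map_mem_timelike : ∀ x ∈ timelike k, φ x ∈ timelike (k + 1)

namespace IsHyperplaneChart

theorem mink_map_eq_zero (hφ : IsHyperplaneChart e φ) (x : Fin (k + 1) → ℝ) :
    mink e (φ x) = 0 := by
  have h : φ x ∈ LinearMap.ker (minkForm e) := hφ.range_eq ▸ LinearMap.mem_range_self φ x
  exact h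

theorem exists_map_eq (hφ : IsHyperplaneChart e φ) {y : Fin (k + 2) → ℝ} (hy : mink e y = 0) :
    ∃ x, φ x = y := by
  have h : y ∈ LinearMap.range φ := hφ.range_eq.symm ▸ hy
  exact h

theorem injective (hφ : IsHyperplaneChart e φ) : Function.Injective φ :=
  (injective_iff_map_eq_zero φ).2 fun x hx => eq_zero_of_forall_mink_eq_zero fun y => by
    rw [← hφ.mink_map, hx, mink_zero_right]

theorem map_mem_timelike_iff (hφ : IsHyperplaneChart e φ) {x : Fin (k + 1) → ℝ} :
    φ x ∈ timelike (k + 1) ↔ x ∈ timelike k := by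
  have ht := kleinLift_zero_mem_timelike k
  rw [mem_timelike_iff ht, mem_timelike_iff (hφ.map_mem_timelike _ ht), hφ.mink_map, hφ.mink_map]

theorem map_mem_causal_iff (hφ : IsHyperplaneChart e φ) {x : Fin (k + 1) → ℝ} :
    φ x ∈ causal (k + 1) ↔ x ∈ causal k := by
  have ht := kleinLift_zero_mem_timelike k
  rw [mem_causal_iff ht, mem_causal_iff (hφ.map_mem_timelike _ ht), hφ.mink_map, hφ.mink_map]

theorem neg (hφ : IsHyperplaneChart e φ) : IsHyperplaneChart (-e) φ where
  mink_map := hφ.mink_map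
  range_eq := by rw [hφ.range_eq, map_neg, LinearMap.ker_neg]
  map_mem_timelike := hφ.map_mem_timelike

theorem reflect (hφ : IsHyperplaneChart e φ) (hv : 0 < mink v v) :
    IsHyperplaneChart (minkReflection v e) (minkReflection v ∘ₗ φ) where
  mink_map x y := (mink_minkReflection hv.ne' _ _).trans (hφ.mink_map x y)
  range_eq := by
    have hinv := involutive_minkReflection hv.ne'
    ext y
    rw [LinearMap.range_comp, hφ.range_eq, LinearMap.mem_ker, minkForm_apply, ← hinv y,
      mink_minkReflection hv.ne', hinv y, Submodule.mem_map]
    exact ⟨fun ⟨x, hx, hxy⟩ => by rwa [← hxy, hinv x], fun hy => ⟨_, hy, hinv y⟩⟩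
  map_mem_timelike x hx := minkReflection_mem_timelike hv (hφ.map_mem_timelike x hx)

end IsHyperplaneChart

theorem mink_single_last (x : Fin (k + 2) → ℝ) :
    mink (Pi.single (Fin.last (k + 1)) 1) x = x (Fin.last (k + 1)) := by
  simp only [mink, Fin.sum_univ_castSucc, Fin.succ_castSucc, Fin.succ_last]
  simp [(Fin.castSucc_lt_last _).ne]

theorem isHyperplaneChart_extendByZero : IsHyperplaneChart (Pi.single (Fin.last (k + 1)) 1)
    (Function.ExtendByZero.linearMap ℝ (Fin.castSucc : Fin (k + 1) → Fin (k + 2))) := by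
  set φ := Function.ExtendByZero.linearMap ℝ (Fin.castSucc : Fin (k + 1) → Fin (k + 2))
  have hcast (x : Fin (k + 1) → ℝ) (i : Fin (k + 1)) : φ x i.castSucc = x i :=
    (Fin.castSucc_injective _).extend_apply x 0 i
  have hlast (x : Fin (k + 1) → ℝ) : φ x (Fin.last (k + 1)) = 0 :=
    Function.extend_apply' (f := Fin.castSucc) x 0 _ fun ⟨i, hi⟩ => (Fin.castSucc_lt_last i).ne hi
  have hzero (x : Fin (k + 1) → ℝ) : φ x 0 = x 0 := hcast x 0
  have hmink (x y : Fin (k + 1) → ℝ) : mink (φ x) (φ y) = mink x y := by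
    simp only [mink, hzero, Fin.sum_univ_castSucc, Fin.succ_castSucc, hcast, Fin.succ_last, hlast,
      mul_zero, add_zero]
  refine ⟨hmink, ?_, fun x hx => ?_⟩
  · ext y
    rw [LinearMap.mem_ker, minkForm_apply, mink_single_last]
    refine ⟨fun ⟨x, hx⟩ => hx ▸ hlast x, fun hy => ⟨fun i => y i.castSucc, funext fun i => ?_⟩⟩
    cases i using Fin.lastCases with
    | last => rw [hlast, hy]
    | cast i => exact hcast _ i
  · refine (mem_timelike_iff (kleinLift_zero_mem_timelike _)).2 ⟨hmink x x ▸ mink_self_neg hx, ?_⟩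
    rw [mink_eq, hzero, kleinLift_zero, spat_kleinLift, inner_zero_left, one_mul, add_zero]
    exact neg_nonpos.2 (pos_of_mem_timelike hx).le

theorem exists_isHyperplaneChart (he : mink e e = 1) : ∃ φ, IsHyperplaneChart e φ := by
  set b : Fin (k + 2) → ℝ := Pi.single (Fin.last (k + 1)) 1
  have hbb : mink b b = 1 := (mink_single_last b).trans (Pi.single_eq_same _ _)
  wlog hbe : mink b e ≤ 0 generalizing e
  · obtain ⟨φ, hφ⟩ := this (e := -e) (by simpa [mink] using he)
      (by rw [← neg_one_smul ℝ, mink_smul_right]; linarith)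
    exact ⟨φ, neg_neg e ▸ hφ.neg⟩
  have hpos : 0 < mink (b - e) (b - e) := by
    simp only [mink_sub_left, mink_sub_right, hbb, he, mink_comm e b]
    linarith
  have hreflect := isHyperplaneChart_extendByZero.reflect hpos
  rw [minkReflection_sub_apply (hbb.trans he.symm) hpos.ne'] at hreflect
  exact ⟨_, hreflect⟩

end HyperplaneChart

namespace HypPolyhedron

variable {k : ℕ} {P : HypPolyhedron (k + 1)} {J : Finset (Fin P.m)} {a : Fin P.m}

/-- `Q`, placed in the hyperplane `H_a` by the chart `φ`, is the facet of `P` on `H_a`, and its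
hyperplanes are the traces of those hyperplanes `H_b` with `b ∈ J` that are orthogonal to `H_a`; the
map `f` sends the label of such a trace to `b`. -/
structure IsFacet (P : HypPolyhedron (k + 1)) (J : Finset (Fin P.m)) (a : Fin P.m)
    (Q : HypPolyhedron k) (φ : (Fin (k + 1) → ℝ) →ₗ[ℝ] (Fin (k + 2) → ℝ))
    (f : Fin Q.m → Fin P.m) : Prop where
  chart : IsHyperplaneChart (P.e a) φ
  mem_cone_iff : ∀ x, x ∈ Q.cone ↔ φ x ∈ P.cone
  map_normal : ∀ i, φ (Q.e i) = P.e (f i)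
  injective : Function.Injective f
  mem_range : ∀ b, b ∈ Set.range f ↔ b ∈ J ∧ mink (P.e a) (P.e b) = 0

theorem IsIrredundant.exists_isFacet (hJ : P.IsIrredundant J) (hra : P.IsRightAngled)
    (ha : a ∈ J) : ∃ Q φ f, P.IsFacet J a Q φ f := by
  obtain ⟨φ, hφ⟩ := exists_isHyperplaneChart (P.unit a)
  set N := J.filter fun b => mink (P.e a) (P.e b) = 0
  have hN {b} : b ∈ N ↔ b ∈ J ∧ mink (P.e a) (P.e b) = 0 := Finset.mem_filter
  let f := N.orderEmbOfFin rfl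
  have hf (i) : f i ∈ N := N.orderEmbOfFin_mem rfl i
  have hrange (b) : b ∈ Set.range f ↔ b ∈ N := by rw [Finset.range_orderEmbOfFin, Finset.mem_coe]
  choose q hq using fun i => hφ.exists_map_eq (hN.1 (hf i)).2
  have hmink (i x) : mink (q i) x = mink (P.e (f i)) (φ x) := by rw [← hφ.mink_map, hq]
  obtain ⟨r, hr, har, hJr⟩ := hJ.exists_mem a ha
  obtain ⟨t, rfl⟩ := hφ.exists_map_eq har
  have ht := hφ.map_mem_timelike_iff.1 hr
  have hneg (i) : mink (q i) t < 0 := by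
    rw [hmink]
    refine hJr _ (hN.1 (hf i)).1 fun hia => ?_
    have h := (hN.1 (hf i)).2
    rw [hia, P.unit] at h
    exact one_ne_zero h
  refine ⟨⟨N.card, q, fun i => by rw [hmink, hq, P.unit],
    ⟨_, kleinMap_mem_interior_image_hyperboloid ht hneg⟩⟩, φ, f, hφ, fun x => ?_, hq,
    f.injective, fun b => (hrange b).trans hN⟩
  refine ⟨fun hx => hJ.mem_cone_of_orthogonal hra ha (hφ.map_mem_causal_iff.2 hx.1)
    (hφ.mink_map_eq_zero x) fun b hb hab => ?_, fun hx => ⟨hφ.map_mem_causal_iff.1 hx.1, fun i =>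
      (hmink i x).trans_le (hx.2 _)⟩⟩
  obtain ⟨i, rfl⟩ := (hrange b).2 (hN.2 ⟨hb, hab⟩)
  exact (hmink i x).symm.trans_le (hx.2 i)

namespace IsFacet

variable {Q : HypPolyhedron k} {φ : (Fin (k + 1) → ℝ) →ₗ[ℝ] (Fin (k + 2) → ℝ)}
  {f : Fin Q.m → Fin P.m}

theorem mink_normal (hQ : P.IsFacet J a Q φ f) (i : Fin Q.m) (x : Fin (k + 1) → ℝ) :
    mink (P.e (f i)) (φ x) = mink (Q.e i) x := by
  rw [← hQ.map_normal, hQ.chart.mink_map]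

theorem finiteVolume (hQ : P.IsFacet J a Q φ f) (hP : P.FiniteVolume) : Q.FiniteVolume := by
  have hmap : PointedCone.map φ Q.cone =
      P.cone ⊓ PointedCone.ofSubmodule (LinearMap.ker (minkForm (P.e a))) := by
    ext y
    refine ⟨?_, fun ⟨hyP, hay⟩ => ?_⟩
    · rintro ⟨x, hx, rfl⟩
      exact ⟨(hQ.mem_cone_iff x).1 hx, hQ.chart.mink_map_eq_zero x⟩
    · obtain ⟨x, rfl⟩ := hQ.chart.exists_map_eq hay
      exact ⟨x, (hQ.mem_cone_iff x).2 hyP, rfl⟩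
  have hfg : (PointedCone.map φ Q.cone).FG :=
    hmap ▸ fg_of_isFaceOf (isFaceOf_inf_ker fun x hx => hx.2 a) (P.finiteVolume_iff_fg.1 hP)
  exact Q.finiteVolume_iff_fg.2 (Submodule.fg_of_fg_map_injective
    (φ.restrictScalars {c : ℝ // 0 ≤ c}) hQ.chart.injective hfg)

theorem isRightAngled (hQ : P.IsFacet J a Q φ f) (hJ : P.IsIrredundant J)
    (hra : P.IsRightAngled) (hk : 3 ≤ k) : Q.IsRightAngled := by
  rintro i j hij ⟨F, ⟨hF, -, hdim⟩, hi, hj⟩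
  obtain ⟨p, hp, q, hq, hpq⟩ := nontrivial_of_sdim_pos (by omega : 0 < sdim F)
  have hhalf : (0 : ℝ) < 1 / 2 := by norm_num
  have hz : (1 / 2 : ℝ) • p + (1 / 2 : ℝ) • q ∈ F :=
    hF.convex Q.convex_cl hp hq hhalf.le hhalf.le (add_halves 1)
  obtain ⟨x, hx, hxz⟩ := Q.mem_image_carrier_of_norm_lt_one (hF.subset hz)
    (norm_combo_lt_of_ne (Q.norm_le_one_of_mem_cl (hF.subset hp))
      (Q.norm_le_one_of_mem_cl (hF.subset hq)) hpq hhalf hhalf (add_halves 1))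
  rw [← hxz] at hz
  rw [← hQ.mink_normal, hQ.map_normal]
  exact hJ.mink_eq_zero hra ((hQ.mem_range _).1 ⟨i, rfl⟩).1 ((hQ.mem_range _).1 ⟨j, rfl⟩).1
    (hQ.injective.ne hij) (hQ.chart.map_mem_timelike x (mem_hyperboloid_iff.1 hx.1).1)
    ((hQ.mink_normal i x).trans (hi x hx hz)) ((hQ.mink_normal j x).trans (hj x hx hz))

theorem not_isCompactPoly (hQ : P.IsFacet J a Q φ f) {w : Fin (k + 2) → ℝ} (hw : w ∈ P.cone)
    (hw0 : w ≠ 0) (hww : mink w w = 0) (haw : mink (P.e a) w = 0) : ¬ Q.IsCompactPoly := by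
  intro hc
  obtain ⟨z, rfl⟩ := hQ.chart.exists_map_eq haw
  have hz := Q.kleinMap_mem_idealVerts ((hQ.mem_cone_iff z).2 hw)
    (ne_of_apply_ne φ (by rwa [map_zero])) ((hQ.chart.mink_map z z).symm.trans hww)
  exact (hc.2 _ hz.1).ne hz.2

section Parallel

variable {w w' : EuclideanSpace ℝ (Fin k)} {j : Fin P.m}

theorem exists_mink_neg (hQ : P.IsFacet J a Q φ f) (hJ : P.IsIrredundant J)
    (hP : P.FiniteVolume) (hw : w ∈ Q.idealVerts) :
    ∃ j ∈ J, mink (P.e j) (φ (kleinLift w)) = 0 ∧ mink (P.e j) (P.e a) < 0 := by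
  obtain ⟨hwQ, hw1⟩ := Q.mem_idealVerts_iff.1 hw
  refine hJ.exists_mink_neg (P.finiteVolume_iff_fg.1 hP)
    ((hQ.mem_cone_iff _).1 (Q.mem_cl_iff.1 hwQ)) ?_ ?_ (hQ.chart.mink_map_eq_zero _)
    (P.unit a ▸ one_pos)
  · rw [Ne, map_eq_zero_iff φ hQ.chart.injective]
    exact kleinLift_ne_zero w
  · rw [hQ.chart.mink_map, mink_kleinLift_self_eq_zero, hw1]

/- If `H_j` met `H_a` at two ideal points, it would meet it along the line joining them, hence
orthogonally. -/
theorem eq_of_mink_neg (hQ : P.IsFacet J a Q φ f) (hJ : P.IsIrredundant J) (hra : P.IsRightAngled)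
    (ha : a ∈ J) (hj : j ∈ J) (hja : mink (P.e j) (P.e a) < 0) (hw : ‖w‖ ≤ 1) (hw' : ‖w'‖ ≤ 1)
    (hjw : mink (P.e j) (φ (kleinLift w)) = 0) (hjw' : mink (P.e j) (φ (kleinLift w')) = 0) :
    w = w' := by
  by_contra! hne
  have ht : kleinLift w + kleinLift w' ∈ timelike k :=
    add_mem_timelike_of_mink_neg (kleinLift_mem_causal.2 hw) (kleinLift_mem_causal.2 hw')
      (mink_kleinLift_neg hw hw' hne)
  have hja' : j ≠ a := by
    rintro rfl
    exact hja.not_gt (P.unit j ▸ one_pos)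
  refine hja.ne (hJ.mink_eq_zero hra hj ha hja' (hQ.chart.map_mem_timelike _ ht) ?_
    (hQ.chart.mink_map_eq_zero _))
  rw [map_add, mink_add_right, hjw, hjw', add_zero]

theorem vInf_le (hQ : P.IsFacet J a Q φ f) (hJ : P.IsIrredundant J) (hra : P.IsRightAngled)
    (ha : a ∈ J) (hP : P.FiniteVolume) :
    Q.vInf ≤ (J.filter fun j => mink (P.e j) (P.e a) < 0).card := by
  have : Nonempty (Fin P.m) := ⟨a⟩
  choose! j hjJ hjw hja using fun w (hw : w ∈ Q.idealVerts) => hQ.exists_mink_neg hJ hP hw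
  rw [vInf, ← Set.ncard_coe_finset]
  refine Set.ncard_le_ncard_of_injOn j
    (fun w hw => Finset.mem_filter.2 ⟨hjJ w hw, hja w hw⟩) (fun w hw w' hw' hww' => ?_)
    (Finset.finite_toSet _)
  exact hQ.eq_of_mink_neg hJ hra ha (hjJ w hw) (hja w hw) hw.2.le hw'.2.le (hjw w hw)
    (hww' ▸ hjw w' hw')

end Parallel

theorem m_eq_card (hQ : P.IsFacet J a Q φ f) :
    Q.m = (J.filter fun b => mink (P.e a) (P.e b) = 0).card := by
  have hrange : Set.range f = (J.filter fun b => mink (P.e a) (P.e b) = 0 : Finset (Fin P.m)) := by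
    ext b
    rw [hQ.mem_range, Finset.mem_coe, Finset.mem_filter]
  rw [← Set.ncard_coe_finset, ← hrange, Set.ncard_range_of_injective hQ.injective, Nat.card_fin]

theorem one_add_le_card (hQ : P.IsFacet J a Q φ f) (hJ : P.IsIrredundant J)
    (hra : P.IsRightAngled) (ha : a ∈ J) (hP : P.FiniteVolume) (hk : 2 ≤ k) :
    1 + (Q.a (k - 1) + Q.vInf) ≤ J.card := by
  set A := J.filter fun b => mink (P.e a) (P.e b) = 0
  set B := J.filter fun j => mink (P.e j) (P.e a) < 0
  have hAB : Disjoint A B := Finset.disjoint_left.2 fun b hbA hbB =>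
    (Finset.mem_filter.1 hbB).2.ne (mink_comm _ _ ▸ (Finset.mem_filter.1 hbA).2)
  have ha' : a ∉ A ∪ B := by
    simp only [A, B, Finset.mem_union, Finset.mem_filter, P.unit]
    norm_num
  calc 1 + (Q.a (k - 1) + Q.vInf) ≤ 1 + (A.card + B.card) := by
        gcongr
        · exact hQ.m_eq_card ▸ a_le_m hk
        · exact hQ.vInf_le hJ hra ha hP
    _ = (insert a (A ∪ B)).card := by
        rw [Finset.card_insert_of_notMem ha', Finset.card_union_of_disjoint hAB, add_comm]
    _ ≤ J.card := Finset.card_le_card (Finset.insert_subset ha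
        (Finset.union_subset (Finset.filter_subset _ _) (Finset.filter_subset _ _)))

end IsFacet

end HypPolyhedron

/- In dimension `2` right-angledness concerns the `0`-faces, and `faceInHyperplane`, which only
tests points of the hyperboloid, holds vacuously at an ideal vertex. Two parallel sides would
therefore have to be orthogonal. -/
theorem nuSet_two : nuSet 2 = ∅ := by
  rw [Set.eq_empty_iff_forall_notMem]
  rintro _ ⟨P, hP, hra, hnc, -⟩
  obtain ⟨w, hw, hw0, hww⟩ := P.exists_null_mem_cone hP hnc
  obtain ⟨J, hJ⟩ := P.exists_isIrredundant
  have hfg := P.finiteVolume_iff_fg.1 hP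
  obtain ⟨a, -, haw⟩ := hJ.exists_mink_eq_zero le_rfl hfg hw hw0 hww
  obtain ⟨j, -, -, hja⟩ := hJ.exists_mink_neg hfg hw hw0 hww haw (P.unit a ▸ one_pos)
  have hne : j ≠ a := by
    rintro rfl
    exact hja.not_gt (P.unit j ▸ one_pos)
  obtain ⟨hvert, hnorm⟩ := P.kleinMap_mem_idealVerts hw hw0 hww
  have hface := P.faceInHyperplane_singleton_of_norm_eq_one hnorm
  refine hja.ne (hra j a hne ⟨_, ⟨hvert, Set.singleton_nonempty _, ?_⟩, hface _, hface _⟩)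
  rw [sdim, vectorSpan_singleton, finrank_bot]

theorem nu_two : nu 2 = 0 := by
  rw [nu, nuSet_two, Nat.sInf_empty]

/-- For `n ≥ 3`, every finite-volume non-compact right-angled convex hyperbolic
`n`-polyhedron has at least `1 + ν_{n-1}` facets. -/
theorem facets_lower_bound (n : ℕ) (hn : 3 ≤ n) (P : HypPolyhedron n)
    (hfv : P.FiniteVolume) (hra : P.IsRightAngled) (hnc : ¬ P.IsCompactPoly) :
    1 + nu (n - 1) ≤ P.a (n - 1) := by
  obtain ⟨k, rfl⟩ : ∃ k, n = k + 1 := ⟨n - 1, by omega⟩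
  obtain ⟨w, hw, hw0, hww⟩ := P.exists_null_mem_cone hfv hnc
  obtain ⟨J, hJ⟩ := P.exists_isIrredundant
  obtain ⟨a, ha, haw⟩ := hJ.exists_mink_eq_zero (by omega) (P.finiteVolume_iff_fg.1 hfv) hw hw0 hww
  refine le_trans ?_ (hJ.card_le_a (by omega))
  rw [Nat.add_sub_cancel]
  rcases (show 2 ≤ k by omega).eq_or_lt with rfl | hk
  · rw [nu_two]
    exact Finset.card_pos.2 ⟨a, ha⟩
  · obtain ⟨Q, φ, f, hQ⟩ := hJ.exists_isFacet hra ha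
    have hmem : Q.a (k - 1) + Q.vInf ∈ nuSet k := ⟨Q, hQ.finiteVolume hfv,
      hQ.isRightAngled hJ hra hk, hQ.not_isCompactPoly hw hw0 hww haw, rfl⟩
    exact (Nat.add_le_add_left (Nat.sInf_le hmem) 1).trans
      (hQ.one_add_le_card hJ hra ha hfv hk.le)
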